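/- arXiv:1105.5478 — 7 statements merged into one kernel-verified Lean document; each statement's English description precedes it below -/
import Mathlib

section
/- Let G be any group with a collection {σ_j | j ∈ J} of pairwise non-isomorphic splittings, where σ_j is a splitting over H_j, and for each j let X_j be the almost invariant set arising from σ_j. Then Σ := ⋃_{j∈J} Σ(X_j) is in good position: for all A, B ∈ Σ, if two of the four corners A∩B, A∩B*, A*∩B, A*∩B* are small (i.e. Stab(A)-finite), then at least one corner of the pair (A,B) is empty. -/
/-!
Every member of `Σ` is the standard set `d.std v` of a directed edge `d` of one of the trees.
Directed edges of a tree are ordered by inclusion of their half-trees, and any two edges of the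
same tree are nested; so a pair of members of `Σ` coming from the same splitting always has an
empty corner (`Edge.exists_corner_empty`). For members `d.std v`, `c.std w` coming from different
splittings it is shown that two corners can never be small, because the trees would be isomorphic.

Smallness is measured by `Sm d S`: the set of translates `x⁻¹ • d`, `x ∈ S`, is finite. As the
trees have no global fixed vertex, every edge can be translated strictly into its own half-tree
(`hasTranslations`), and consequently no standard set, from either tree, is small
(`Edge.not_sm_std`). Hence two small corners have to be opposite ones, which means
that `d` is almost equal to `c` or to its reverse: `Edge.Rel v w d c` says that the symmetric
difference of the standard sets is small. This relation is symmetric, as almost equal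
edges have the same stabilizer, and it preserves comparability; within one orbit it preserves the
order (`Edge.Rel.smul_le_smul`).

What may go wrong is the comparison of `d` with a reversed translate `(k • d).bar`: it can be the
opposite of that of `c` with `(k • c).bar`. In that case `(k • d).bar` is itself almost equal to
`d` (`Edge.Rel.of_reversed`), and `c` has to be moved inside its almost equality class, which is
a chain. The element `g` for which `(g • d).bar` is the smallest such edge above `d` satisfies
`g ^ 2 • d = d`, so `x ↦ (g • x).bar` is an order-reversing involution of the class of `c`, and
the edge just below its centre is a partner with the correct pattern of comparisons
(`Edge.exists_good`).

For such a pair `e`, `f` the assignment `g • e ↦ g • f`, `(g • e).bar ↦ (g • f).bar` is an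
equivariant order isomorphism between the sets of directed edges commuting with reversal. Since
two distinct edges `d`, `d'` have the same origin exactly when `d'` covers `d.bar`, it comes from
an equivariant isomorphism of the trees (`equivIso_of_corr`).
-/

open scoped Pointwise

universe u v w

/-- A subset `S` of `G` is `H`-finite if it is contained in the union of
finitely many right cosets `Hg` of `H` in `G`. -/
def HFinite {G : Type u} [Group G] (H : Subgroup G) (S : Set G) : Prop :=
  ∃ F : Finset G, S ⊆ ⋃ g ∈ F, (H : Set G) * {g}

/-- Two subsets of `G` are `H`-almost equal if their symmetric difference is `H`-finite. -/
def HAlmostEqual {G : Type u} [Group G] (H : Subgroup G) (A B : Set G) : Prop :=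
  HFinite H ((A \ B) ∪ (B \ A))

/-- `X` is an `H`-almost invariant subset of `G`: `hX = X` for all `h ∈ H`, and for
every `g ∈ G` the symmetric difference of `Xg` and `X` is `H`-finite. -/
def IsAlmostInvariant {G : Type u} [Group G] (H : Subgroup G) (X : Set G) : Prop :=
  (∀ h ∈ H, (fun x => h * x) '' X = X) ∧
    ∀ g : G, HAlmostEqual H ((fun x => x * g) '' X) X

/-- An `H`-almost invariant set is nontrivial if neither it nor its complement is `H`-finite. -/
def IsNontrivialAI {G : Type u} [Group G] (H : Subgroup G) (X : Set G) : Prop :=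
  ¬ HFinite H X ∧ ¬ HFinite H Xᶜ

/-- A `G`-tree: a connected acyclic simple graph together with an action of `G` on its
vertices by graph automorphisms, such that no element of `G` interchanges the two
endpoints of any edge. -/
structure GTree (G : Type u) [Group G] (V : Type v) where
  graph : SimpleGraph V
  smul : G → V → V
  smul_one : ∀ x : V, smul 1 x = x
  smul_mul : ∀ (g h : G) (x : V), smul (g * h) x = smul g (smul h x)
  adj_smul : ∀ (g : G) (x y : V), graph.Adj x y → graph.Adj (smul g x) (smul g y)
  no_inversion : ∀ (g : G) (x y : V), graph.Adj x y → ¬ (smul g x = y ∧ smul g y = x)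
  connected : graph.Connected
  acyclic : graph.IsAcyclic

namespace GTree

variable {G : Type u} [Group G] {V : Type v}

/-- The stabilizer of the directed edge `(a, b)`. -/
def edgeStab (T : GTree G V) (a b : V) : Subgroup G where
  carrier := {g : G | T.smul g a = a ∧ T.smul g b = b}
  one_mem' := ⟨T.smul_one a, T.smul_one b⟩
  mul_mem' := by
    rintro x y ⟨hxa, hxb⟩ ⟨hya, hyb⟩
    exact ⟨by rw [T.smul_mul, hya, hxa], by rw [T.smul_mul, hyb, hxb]⟩
  inv_mem' := by
    rintro x ⟨hxa, hxb⟩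
    constructor
    · conv_lhs => rw [← hxa]
      rw [← T.smul_mul, inv_mul_cancel, T.smul_one]
    · conv_lhs => rw [← hxb]
      rw [← T.smul_mul, inv_mul_cancel, T.smul_one]

/-- The `a`-side of the directed edge `(a, b)`: the set of vertices reachable from `a`
after deleting the edge `{a, b}`. -/
def side (T : GTree G V) (a b : V) : Set V :=
  {x : V | (T.graph.deleteEdges {s(a, b)}).Reachable a x}

/-- The standard set determined by the directed edge `(a, b)` and the base vertex `v`:
`{g ∈ G | g • v lies in the a-side of (a, b)}`. -/
def standardSet (T : GTree G V) (a b : V) (v : V) : Set G :=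
  {g : G | T.smul g v ∈ T.side a b}

/-- `(T, a, b)` is a splitting of `G` over `H`: the `G`-tree `T` has no global fixed
vertex, `G` acts transitively on the undirected edges, `(a, b)` is a directed edge,
and the stabilizer of `(a, b)` is `H`. -/
def IsSplitting (T : GTree G V) (a b : V) (H : Subgroup G) : Prop :=
  T.graph.Adj a b ∧
  (∀ x : V, ∃ g : G, T.smul g x ≠ x) ∧
  (∀ c d : V, T.graph.Adj c d →
    ∃ g : G, (T.smul g a = c ∧ T.smul g b = d) ∨ (T.smul g a = d ∧ T.smul g b = c)) ∧
  T.edgeStab a b = H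

/-- Two `G`-trees are (`G`-equivariantly) isomorphic: there is a graph isomorphism
commuting with the `G`-actions. -/
def EquivIso {V₁ : Type v} {V₂ : Type w} (T₁ : GTree G V₁) (T₂ : GTree G V₂) : Prop :=
  ∃ f : T₁.graph ≃g T₂.graph, ∀ (g : G) (x : V₁), f (T₁.smul g x) = T₂.smul g (f x)

end GTree

/-- `Σ(X)`: the family of all translates of `X` and of its complement. -/
def TransSet {G : Type u} [Group G] (X : Set G) : Set (Set G) :=
  {A : Set G | ∃ g : G, A = g • X ∨ A = (g • X)ᶜ}

/-- A corner `C` of a pair `(A, B)` is small if it is `Stab(A)`-finite. -/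
def SmallCorner {G : Type u} [Group G] (A C : Set G) : Prop :=
  HFinite (MulAction.stabilizer G A) C

/-- At least two of four statements hold. -/
def TwoOfFour (P₁ P₂ P₃ P₄ : Prop) : Prop :=
  (P₁ ∧ P₂) ∨ (P₁ ∧ P₃) ∨ (P₁ ∧ P₄) ∨ (P₂ ∧ P₃) ∨ (P₂ ∧ P₄) ∨ (P₃ ∧ P₄)

/-- Almost inclusion: `A ≤ B` iff `A ∩ B*` is empty or is the only small corner of `(A, B)`. -/
def AILE {G : Type u} [Group G] (A B : Set G) : Prop :=
  A ∩ Bᶜ = ∅ ∨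
    (SmallCorner A (A ∩ Bᶜ) ∧ ¬ SmallCorner A (A ∩ B) ∧ ¬ SmallCorner A (Aᶜ ∩ B) ∧ ¬ SmallCorner A (Aᶜ ∩ Bᶜ))

/-- `A` crosses `B`: no corner of the pair `(A, B)` is small. -/
def AICrosses {G : Type u} [Group G] (A B : Set G) : Prop :=
  ¬ SmallCorner A (A ∩ B) ∧ ¬ SmallCorner A (A ∩ Bᶜ) ∧ ¬ SmallCorner A (Aᶜ ∩ B) ∧ ¬ SmallCorner A (Aᶜ ∩ Bᶜ)

/-- A finite family of almost invariant sets satisfies sandwiching. -/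
def Sandwiching {G : Type u} [Group G] {n : ℕ} (X : Fin n → Set G) : Prop :=
  ∀ j k : Fin n,
    (∃ A ∈ TransSet (X k), ∃ B ∈ TransSet (X k), AILE A (X j) ∧ AILE (X j) B) ∨
    ∀ A ∈ TransSet (X k), AICrosses (X j) A

/-- The splitting over `H` is a trivially ascending HNN extension: `H` is normal in `G`
and `G/H` is infinite cyclic. -/
def TrivAscHNN {G : Type u} [Group G] (H : Subgroup G) : Prop :=
  H.Normal ∧ ∃ t : G, (∀ g : G, ∃ n : ℤ, g * (t ^ n)⁻¹ ∈ H) ∧ ∀ n : ℤ, t ^ n ∈ H → n = 0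

/-- Two subsets are nested if one of the four inclusions among them and their
complements holds. -/
def Nested {G : Type u} (A B : Set G) : Prop :=
  A ⊆ B ∨ A ⊆ Bᶜ ∨ Aᶜ ⊆ B ∨ Aᶜ ⊆ Bᶜ

/-- `X` crosses `Y` with respect to the subgroup `L`: no corner of `(X, Y)` is `L`-finite. -/
def CrossesWrt {G : Type u} [Group G] (L : Subgroup G) (X Y : Set G) : Prop :=
  ¬ HFinite L (X ∩ Y) ∧ ¬ HFinite L (X ∩ Yᶜ) ∧ ¬ HFinite L (Xᶜ ∩ Y) ∧ ¬ HFinite L (Xᶜ ∩ Yᶜ)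


namespace GTree

/-! ### Half-trees of a tree -/

section Sides

variable {G : Type u} [Group G] {V : Type v} (T : GTree G V)

lemma self_mem_side (x y : V) : x ∈ T.side x y := SimpleGraph.Reachable.refl x

lemma notMem_side {x y : V} (h : T.graph.Adj x y) : y ∉ T.side x y := by
  have hb := SimpleGraph.isAcyclic_iff_forall_adj_isBridge.1 T.acyclic h
  exact (SimpleGraph.isBridge_iff.1 hb)

/-- Only the edge `{x, y}` itself joins the two sides of `(x, y)`. -/
lemma side_adj_iff {x y p q : V} (h : T.graph.Adj p q) (hne : s(p, q) ≠ s(x, y)) :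
    p ∈ T.side x y ↔ q ∈ T.side x y := by
  have hadj : (T.graph.deleteEdges {s(x, y)}).Adj p q := by
    rw [SimpleGraph.deleteEdges_adj]
    exact ⟨h, by simpa using hne⟩
  exact ⟨fun hp => SimpleGraph.Reachable.trans hp hadj.reachable,
    fun hq => SimpleGraph.Reachable.trans hq hadj.symm.reachable⟩

lemma side_symm {x y : V} (h : T.graph.Adj x y) : T.side y x = (T.side x y)ᶜ := by
  have hdel : T.graph.deleteEdges {s(y, x)} = T.graph.deleteEdges {s(x, y)} := by
    rw [Sym2.eq_swap]
  ext p
  constructor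
  · intro hp hp'
    refine T.notMem_side h ?_
    change (T.graph.deleteEdges {s(y, x)}).Reachable y p at hp
    rw [hdel] at hp
    exact SimpleGraph.Reachable.trans hp' hp.symm
  · intro hp
    have key : ∀ q, T.graph.Reachable x q → q ∈ T.side x y ∨ q ∈ T.side y x := by
      rintro q ⟨w⟩
      induction w using SimpleGraph.Walk.concatRec with
      | Hnil => exact Or.inl (T.self_mem_side _ _)
      | Hconcat w hadj ih =>
        rename_i u' q r
        by_cases hs : s(q, r) = s(u', y)
        · rcases Sym2.eq_iff.1 hs with ⟨rfl, rfl⟩ | ⟨rfl, rfl⟩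
          · exact Or.inr (T.self_mem_side _ _)
          · exact Or.inl (T.self_mem_side _ _)
        · rw [← T.side_adj_iff hadj hs, ← T.side_adj_iff hadj (by rwa [Sym2.eq_swap (a := y)])]
          exact ih h hdel hp
    exact (key p (T.connected.preconnected x p)).resolve_left hp

/-- If `x'` is not in the half-tree `side x y`, then the edge `{x', y'}` does not cut it. -/
lemma side_uncut {x y x' y' p : V} (hx' : x' ∉ T.side x y) (hp : p ∈ T.side x y) :
    p ∈ T.side x' y' ↔ x ∈ T.side x' y' := by
  have key : ∀ {u q : V}, (T.graph.deleteEdges {s(x, y)}).Walk u q → u ∈ T.side x y →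
      (q ∈ T.side x' y' ↔ u ∈ T.side x' y') := by
    intro u q w
    induction w with
    | nil => exact fun _ => Iff.rfl
    | cons hadj w ih =>
      rename_i a b c
      intro ha
      have hb : b ∈ T.side x y := SimpleGraph.Reachable.trans ha hadj.reachable
      rw [ih hb]
      refine (T.side_adj_iff (SimpleGraph.deleteEdges_adj.1 hadj).1 ?_).symm
      intro hs
      rcases Sym2.eq_iff.1 hs with ⟨rfl, rfl⟩ | ⟨rfl, rfl⟩
      · exact hx' ha
      · exact hx' hb
  obtain ⟨w⟩ := hp
  exact key w (T.self_mem_side _ _)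

lemma side_subset {x y x' y' : V} (hx : x ∈ T.side x' y') (hx' : x' ∉ T.side x y) :
    T.side x y ⊆ T.side x' y' := fun _ hp => (T.side_uncut hx' hp).2 hx

protected lemma smul_inv_smul (g : G) (x : V) : T.smul g (T.smul g⁻¹ x) = x := by
  rw [← T.smul_mul, mul_inv_cancel, T.smul_one]

protected lemma inv_smul_smul (g : G) (x : V) : T.smul g⁻¹ (T.smul g x) = x := by
  rw [← T.smul_mul, inv_mul_cancel, T.smul_one]

lemma smul_injective (g : G) : Function.Injective (T.smul g) :=
  Function.LeftInverse.injective (T.inv_smul_smul g)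

lemma smul_mem_side {x y p : V} (g : G) (hp : p ∈ T.side x y) :
    T.smul g p ∈ T.side (T.smul g x) (T.smul g y) := by
  have hom : ∀ q r, (T.graph.deleteEdges {s(x, y)}).Adj q r →
      (T.graph.deleteEdges {s(T.smul g x, T.smul g y)}).Adj (T.smul g q) (T.smul g r) := by
    intro q r hqr
    rw [SimpleGraph.deleteEdges_adj] at hqr ⊢
    refine ⟨T.adj_smul g _ _ hqr.1, fun hs => hqr.2 ?_⟩
    have hs' : s(T.smul g q, T.smul g r) = s(T.smul g x, T.smul g y) := hs
    have : Sym2.map (T.smul g) s(q, r) = Sym2.map (T.smul g) s(x, y) := by simpa using hs'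
    exact Sym2.map.injective (T.smul_injective g) this
  exact SimpleGraph.Reachable.map (⟨T.smul g, fun h => hom _ _ h⟩ :
    T.graph.deleteEdges {s(x, y)} →g T.graph.deleteEdges {s(T.smul g x, T.smul g y)}) hp

lemma mem_side_smul {x y p : V} (g : G) :
    p ∈ T.side (T.smul g x) (T.smul g y) ↔ T.smul g⁻¹ p ∈ T.side x y := by
  constructor
  · intro h
    have := T.smul_mem_side g⁻¹ h
    rwa [T.inv_smul_smul, T.inv_smul_smul] at this
  · intro h
    have := T.smul_mem_side g h
    rwa [T.smul_inv_smul] at this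

/-- Two distinct vertices `p`, `q` are separated by an edge starting at `p`. -/
lemma exists_separating {p q : V} (hpq : p ≠ q) :
    ∃ r, T.graph.Adj p r ∧ q ∉ T.side p r := by
  obtain ⟨w, hw⟩ := (T.connected.preconnected p q).exists_isPath
  cases w with
  | nil => exact absurd rfl hpq
  | cons hadj w =>
    rename_i r
    refine ⟨r, hadj, ?_⟩
    rw [SimpleGraph.Walk.cons_isPath_iff] at hw
    have hq : q ∈ T.side r p := by
      refine ⟨w.toDeleteEdges _ ?_⟩
      intro e he hs
      obtain rfl : e = s(r, p) := hs
      exact hw.2 (w.snd_mem_support_of_mem_edges he)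
    rw [T.side_symm hadj] at hq
    exact hq

end Sides

/-! ### Directed edges as a `G`-poset with involution -/

/-- The directed edges of a `G`-tree. -/
def Edge {G : Type u} [Group G] {V : Type v} (T : GTree G V) : Type v :=
  {p : V × V // T.graph.Adj p.1 p.2}

namespace Edge

variable {G : Type u} [Group G] {V : Type v} {T : GTree G V}

/-- The origin of a directed edge. -/
def src (d : T.Edge) : V := d.1.1

/-- The terminal vertex of a directed edge. -/
def tgt (d : T.Edge) : V := d.1.2

lemma adj (d : T.Edge) : T.graph.Adj d.src d.tgt := d.2

@[ext] lemma ext {d c : T.Edge} (h₁ : d.src = c.src) (h₂ : d.tgt = c.tgt) : d = c :=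
  Subtype.ext (Prod.ext h₁ h₂)

/-- The half-tree of a directed edge: the component containing its origin. -/
def half (d : T.Edge) : Set V := T.side d.src d.tgt

/-- The same edge with the opposite direction. -/
def bar (d : T.Edge) : T.Edge := ⟨(d.tgt, d.src), d.adj.symm⟩

instance : MulAction G T.Edge where
  smul g d := ⟨(T.smul g d.src, T.smul g d.tgt), T.adj_smul g _ _ d.adj⟩
  one_smul _ := Edge.ext (T.smul_one _) (T.smul_one _)
  mul_smul g h _ := Edge.ext (T.smul_mul g h _) (T.smul_mul g h _)

@[simp] lemma src_smul (g : G) (d : T.Edge) : (g • d).src = T.smul g d.src := rfl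
@[simp] lemma tgt_smul (g : G) (d : T.Edge) : (g • d).tgt = T.smul g d.tgt := rfl
@[simp] lemma src_bar (d : T.Edge) : d.bar.src = d.tgt := rfl
@[simp] lemma tgt_bar (d : T.Edge) : d.bar.tgt = d.src := rfl
@[simp] lemma bar_bar (d : T.Edge) : d.bar.bar = d := rfl
@[simp] lemma smul_bar (g : G) (d : T.Edge) : g • d.bar = (g • d).bar := rfl

lemma bar_inj {d c : T.Edge} : d.bar = c.bar ↔ d = c :=
  ⟨fun h => by rw [← d.bar_bar, h, c.bar_bar], fun h => by rw [h]⟩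

lemma bar_ne (d : T.Edge) : d.bar ≠ d := fun h =>
  d.adj.ne (by simpa using (congrArg tgt h))

lemma half_bar (d : T.Edge) : d.bar.half = d.halfᶜ := T.side_symm d.adj

lemma src_mem (d : T.Edge) : d.src ∈ d.half := T.self_mem_side _ _

lemma tgt_notMem (d : T.Edge) : d.tgt ∉ d.half := T.notMem_side d.adj

lemma mem_half_smul {g : G} {d : T.Edge} {p : V} : p ∈ (g • d).half ↔ T.smul g⁻¹ p ∈ d.half :=
  T.mem_side_smul g

lemma mk_eq_iff {d c : T.Edge} : s(d.src, d.tgt) = s(c.src, c.tgt) ↔ d = c ∨ d = c.bar := by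
  rw [Sym2.eq_iff]
  constructor
  · rintro (⟨h₁, h₂⟩ | ⟨h₁, h₂⟩)
    · exact Or.inl (Edge.ext h₁ h₂)
    · exact Or.inr (Edge.ext h₁ h₂)
  · rintro (rfl | rfl)
    · exact Or.inl ⟨rfl, rfl⟩
    · exact Or.inr ⟨rfl, rfl⟩

/-- Both ends of `d` lie on the same side of any other edge. -/
lemma src_mem_iff {d c : T.Edge} (h₁ : d ≠ c) (h₂ : d ≠ c.bar) :
    d.src ∈ c.half ↔ d.tgt ∈ c.half :=
  T.side_adj_iff d.adj (fun h => (mk_eq_iff.1 h).elim h₁ h₂)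

lemma half_injective : Function.Injective (half : T.Edge → Set V) := by
  intro d c h
  by_contra hne
  by_cases hb : d = c.bar
  · have := d.src_mem
    rw [h, hb] at this
    exact c.tgt_notMem this
  · have := (src_mem_iff hne hb).1 (h ▸ d.src_mem)
    exact d.tgt_notMem (h ▸ this)

/-- Directed edges are ordered by inclusion of their half-trees. -/
instance : PartialOrder T.Edge := PartialOrder.lift half half_injective

lemma le_def {d c : T.Edge} : d ≤ c ↔ d.half ⊆ c.half := Iff.rfl

lemma le_of_mem {d c : T.Edge} (h : d.src ∈ c.half) (h' : c.src ∉ d.half) : d ≤ c :=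
  T.side_subset h h'

lemma bar_le_bar {d c : T.Edge} : d.bar ≤ c.bar ↔ c ≤ d := by
  rw [le_def, le_def, half_bar, half_bar, Set.compl_subset_compl]

lemma bar_lt_bar {d c : T.Edge} : d.bar < c.bar ↔ c < d := by
  rw [lt_iff_le_not_ge, lt_iff_le_not_ge, bar_le_bar, bar_le_bar]

lemma le_bar_comm {d c : T.Edge} : d ≤ c.bar ↔ c ≤ d.bar := by
  rw [← bar_le_bar, bar_bar]

lemma lt_bar_comm {d c : T.Edge} : d < c.bar ↔ c < d.bar := by
  rw [← bar_lt_bar, bar_bar]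

lemma bar_lt_comm {d c : T.Edge} : d.bar < c ↔ c.bar < d := by
  rw [← bar_lt_bar, bar_bar]

lemma bar_le_comm {d c : T.Edge} : d.bar ≤ c ↔ c.bar ≤ d := by
  rw [← bar_le_bar, bar_bar]

lemma smul_le_of_le (g : G) {d c : T.Edge} (h : d ≤ c) : g • d ≤ g • c :=
  fun _ hp => mem_half_smul.2 (h (mem_half_smul.1 hp))

lemma smul_le_smul (g : G) {d c : T.Edge} : g • d ≤ g • c ↔ d ≤ c :=
  ⟨fun h => by simpa using smul_le_of_le g⁻¹ h, smul_le_of_le g⟩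

lemma smul_lt_smul (g : G) {d c : T.Edge} : g • d < g • c ↔ d < c := by
  rw [lt_iff_le_not_ge, lt_iff_le_not_ge, smul_le_smul, smul_le_smul]

lemma nested (d c : T.Edge) : d ≤ c ∨ c ≤ d ∨ d ≤ c.bar ∨ d.bar ≤ c := by
  by_cases h₁ : c = d
  · exact Or.inl h₁.ge
  by_cases h₂ : c = d.bar
  · exact Or.inr (Or.inr (Or.inr h₂.ge))
  have hc := src_mem_iff h₁ h₂
  by_cases hs : c.src ∈ d.half
  · -- both ends of `c` are in `d.half`, so `c` does not cut the half-tree of `d.bar`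
    have hs' : c.src ∉ d.bar.half := by rw [half_bar]; exact fun h => h hs
    have ht' : c.tgt ∉ d.bar.half := by rw [half_bar]; exact fun h => h (hc.1 hs)
    by_cases hd : d.bar.src ∈ c.half
    · exact Or.inr (Or.inr (Or.inr (le_of_mem hd hs')))
    · have : d.bar ≤ c.bar := le_of_mem (by rw [half_bar]; exact hd) ht'
      exact Or.inr (Or.inl (bar_le_bar.1 this))
  · by_cases hd : d.src ∈ c.half
    · exact Or.inl (le_of_mem hd hs)
    · exact Or.inr (Or.inr (Or.inl
        (le_of_mem (by rw [half_bar]; exact hd) (fun h => hs (hc.2 h)))))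

lemma not_le_bar {d c : T.Edge} (h : d ≤ c) : ¬ d ≤ c.bar := by
  intro h'
  have := h' d.src_mem
  rw [half_bar] at this
  exact this (h d.src_mem)

lemma not_bar_le {d c : T.Edge} (h : d ≤ c) : ¬ d.bar ≤ c := by
  intro h'
  exact not_le_bar (bar_le_bar.2 h) (by rw [← bar_le_bar]; simpa using h')

lemma smul_ne_bar (g : G) (d : T.Edge) : g • d ≠ d.bar := fun h =>
  T.no_inversion g _ _ d.adj ⟨congrArg src h, congrArg tgt h⟩

lemma bar_smul_ne (g : G) (d : T.Edge) : (g • d).bar ≠ d := fun h =>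
  smul_ne_bar g d (by rw [← h, bar_bar, h])

/-- Only finitely many edges separate two given vertices. -/
lemma finite_separating (p q : V) : {d : T.Edge | p ∈ d.half ∧ q ∉ d.half}.Finite := by
  obtain ⟨w⟩ := T.connected.preconnected p q
  induction w with
  | nil => simp
  | cons hadj w ih =>
    rename_i a b c
    refine (ih.union (Set.finite_singleton (⟨(a, b), hadj⟩ : T.Edge))).subset ?_
    rintro d ⟨h₁, h₂⟩
    by_cases hb : b ∈ d.half
    · exact Or.inl ⟨hb, h₂⟩
    · right
      set k : T.Edge := ⟨(a, b), hadj⟩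
      by_contra hne
      by_cases hk : k = d.bar
      · have : a ∈ d.bar.half := by rw [← hk]; exact k.src_mem
        rw [half_bar] at this
        exact this h₁
      · exact hb ((src_mem_iff (d := k) (c := d) (fun h => hne h.symm) hk).1 h₁)

lemma finite_Icc (d c : T.Edge) : {x : T.Edge | d ≤ x ∧ x ≤ c}.Finite :=
  (finite_separating d.src c.tgt).subset
    (fun _ hx => ⟨hx.1 d.src_mem, fun h => c.tgt_notMem (hx.2 h)⟩)

lemma lt_of_src_eq_tgt {d c : T.Edge} (h : d.tgt = c.src) (hne : c ≠ d.bar) : d < c := by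
  have hdc : d ≠ c := fun hh => d.adj.ne (by rw [h, ← hh])
  refine lt_of_le_of_ne (le_of_mem ?_ (h ▸ d.tgt_notMem)) hdc
  rw [src_mem_iff hdc (fun hh => hne (by rw [hh, bar_bar])), h]
  exact c.src_mem

/-- For `d < c`, the edges `d`, `c` are consecutive exactly when nothing lies strictly
between them. -/
lemma tgt_eq_src_iff {d c : T.Edge} (hdc : d < c) :
    d.tgt = c.src ↔ ∀ x : T.Edge, d < x → ¬ x < c := by
  -- in general the target of the smaller edge lies in the bigger half-tree, and dually
  have aux : ∀ {x y : T.Edge}, x < y → x.tgt ∈ y.half := fun {x y} h =>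
    (src_mem_iff h.ne (fun hh => not_bar_le h.le (by rw [hh, bar_bar]))).1 (h.le x.src_mem)
  have aux' : ∀ {x y : T.Edge}, x < y → y.src ∉ x.half := by
    intro x y h hm
    have := aux (bar_lt_bar.2 h)
    rw [half_bar] at this
    exact this hm
  constructor
  · intro h x h₁ h₂
    exact aux' h₂ (h ▸ aux h₁)
  · intro h
    by_contra hne
    obtain ⟨r, hr, hs⟩ := T.exists_separating hne
    let x : T.Edge := ⟨(d.tgt, r), hr⟩
    have hx : c.src ∉ x.half := hs
    refine h x (lt_of_src_eq_tgt rfl ?_) (lt_of_le_of_ne (le_of_mem (aux hdc) hx) ?_)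
    · intro hb
      refine hx ?_
      rw [hb, half_bar]
      exact aux' hdc
    · intro hb
      exact hne (congrArg src hb)

end Edge

end GTree

namespace GTree

/-! ### Translations along edges -/

section Hyperbolic

variable {G : Type u} [Group G] {V : Type v} {T : GTree G V}

/-- Every directed edge can be moved strictly into its own half-tree by a group element
(necessarily hyperbolic). -/
def HasTranslations (T : GTree G V) : Prop := ∀ d : T.Edge, ∃ z : G, z • d < d

/-- If `a` and `b` lie in different orbits, some element of the stabilizer of `b` moves `a`:
otherwise `b` and its translates are leaves, the tree is a star, and its centre `a` is a
global fixed vertex. -/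
lemma exists_fix_move (a b : V)
    (hfix : ∀ x : V, ∃ g : G, T.smul g x ≠ x)
    (htr : ∀ c d : V, T.graph.Adj c d →
      ∃ g : G, (T.smul g a = c ∧ T.smul g b = d) ∨ (T.smul g a = d ∧ T.smul g b = c))
    (horb : ∀ g : G, T.smul g a ≠ b) : ∃ g : G, T.smul g b = b ∧ T.smul g a ≠ a := by
  by_contra! hcon
  have horb' : ∀ g : G, T.smul g b ≠ a := by
    intro g hg
    refine horb g⁻¹ ?_
    rw [← hg, T.inv_smul_smul]
  -- a neighbour of a translate `k • b` is `k • a`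
  have hleaf : ∀ (k : G) (q : V), T.graph.Adj (T.smul k b) q → q = T.smul k a := by
    intro k q hq
    obtain ⟨g, ⟨h₁, h₂⟩ | ⟨h₁, h₂⟩⟩ := htr _ _ hq
    · refine absurd ?_ (horb (k⁻¹ * g))
      rw [T.smul_mul, h₁, T.inv_smul_smul]
    · have := hcon (k⁻¹ * g) (by rw [T.smul_mul, h₂, T.inv_smul_smul])
      rw [T.smul_mul, h₁] at this
      rw [← this, T.smul_inv_smul]
  have hnb : ∀ q : V, T.graph.Adj a q → ∃ k : G, T.smul k a = a ∧ T.smul k b = q := by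
    intro q hq
    obtain ⟨g, ⟨h₁, h₂⟩ | ⟨h₁, h₂⟩⟩ := htr _ _ hq
    · exact ⟨g, h₁, h₂⟩
    · exact absurd h₂ (horb' g)
  have hstar : ∀ q : V, T.graph.Reachable a q → q = a ∨ T.graph.Adj a q := by
    have hw : ∀ {p q : V}, T.graph.Walk p q → (p = a ∨ T.graph.Adj a p) →
        (q = a ∨ T.graph.Adj a q) := by
      intro p q w
      induction w with
      | nil => exact id
      | cons hadj w ih =>
        intro hp
        apply ih
        rcases hp with rfl | hp
        · exact Or.inr hadj
        · obtain ⟨k, hka, rfl⟩ := hnb _ hp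
          exact Or.inl ((hleaf k _ hadj).trans hka)
    rintro q ⟨w⟩
    exact hw w (Or.inl rfl)
  obtain ⟨g, hg⟩ := hfix a
  rcases hstar _ (T.connected.preconnected a (T.smul g a)) with h | h
  · exact hg h
  · obtain ⟨k, -, hk⟩ := hnb _ h
    refine horb (k⁻¹ * g) ?_
    rw [T.smul_mul, ← hk, T.inv_smul_smul]

/-- The directed edge `(a, b)`. -/
def mkEdge (T : GTree G V) {a b : V} (h : T.graph.Adj a b) : T.Edge := ⟨(a, b), h⟩

lemma edge_transitive {a b : V} {H : Subgroup G} (h : T.IsSplitting a b H) (d : T.Edge) :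
    ∃ g : G, d = g • T.mkEdge h.1 ∨ d = g • (T.mkEdge h.1).bar := by
  obtain ⟨g, ⟨h₁, h₂⟩ | ⟨h₁, h₂⟩⟩ := h.2.2.1 _ _ d.adj
  · exact ⟨g, Or.inl (Edge.ext h₁.symm h₂.symm)⟩
  · exact ⟨g, Or.inr (Edge.ext h₂.symm h₁.symm)⟩

lemma hasTranslations {a b : V} {H : Subgroup G} (h : T.IsSplitting a b H) :
    T.HasTranslations := by
  obtain ⟨hab, hfix, htr, -⟩ := id h
  let e : T.Edge := T.mkEdge hab
  have hup : ∃ t : G, e < t • e := by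
    by_cases horb : ∃ g : G, T.smul g a = b
    · obtain ⟨g, hg⟩ := horb
      exact ⟨g, Edge.lt_of_src_eq_tgt hg.symm (Edge.smul_ne_bar g e)⟩
    · push Not at horb
      obtain ⟨k, hkb, hka⟩ := exists_fix_move a b hfix htr horb
      obtain ⟨l, hla, hlb⟩ := exists_fix_move (T := T) b a hfix
        (fun c d hcd => by
          obtain ⟨g, hg⟩ := htr d c hcd.symm
          exact ⟨g, hg.imp And.symm And.symm⟩)
        (fun g hg => horb g⁻¹ (by rw [← hg, T.inv_smul_smul]))
      -- the edges `(a, b)`, `(b, k a)`, `(k a, k l b)` form a reduced path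
      have h₁ : e < (k • e).bar := by
        refine Edge.lt_of_src_eq_tgt hkb.symm (fun hh => hka ?_)
        exact congrArg Edge.src (Edge.bar_inj.1 hh)
      have h₂ : (k • e).bar < (k * l) • e := by
        refine Edge.lt_of_src_eq_tgt ?_ (fun hh => hlb ?_)
        · change T.smul k a = T.smul (k * l) a
          rw [T.smul_mul, hla]
        · have h' : T.smul (k * l) b = T.smul k b := congrArg Edge.tgt hh
          rw [T.smul_mul] at h'
          exact T.smul_injective k h'
      exact ⟨k * l, h₁.trans h₂⟩
  obtain ⟨t, ht⟩ := hup
  have ht' : t⁻¹ • e < e := by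
    have := (Edge.smul_lt_smul t⁻¹).2 ht
    rwa [inv_smul_smul] at this
  intro d
  obtain ⟨g, rfl | rfl⟩ := edge_transitive h d
  · refine ⟨g * t⁻¹ * g⁻¹, ?_⟩
    rw [← mul_smul, inv_mul_cancel_right, mul_smul, Edge.smul_lt_smul]
    exact ht'
  · refine ⟨g * t * g⁻¹, ?_⟩
    rw [← mul_smul, inv_mul_cancel_right, mul_smul, Edge.smul_lt_smul, Edge.smul_bar,
      Edge.bar_lt_bar]
    exact ht

namespace Edge

lemma inv_smul_bar_lt {z : G} {d : T.Edge} (hz : z • d < d) : z⁻¹ • d.bar < d.bar := by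
  rw [smul_bar, bar_lt_bar, ← smul_lt_smul z, smul_inv_smul]
  exact hz

lemma pow_smul_strictAnti {z : G} {d : T.Edge} (hz : z • d < d) :
    StrictAnti (fun n : ℕ => z ^ n • d) :=
  strictAnti_nat_of_succ_lt (fun n => by
    rw [pow_succ, mul_smul, smul_lt_smul]
    exact hz)

/-- Powers of an element translating `d` into itself push every vertex into the half-tree
of `d`. -/
lemma eventually_mem {z : G} {d : T.Edge} (hz : z • d < d) (p : V) :
    ∃ N : ℕ, ∀ n ≥ N, T.smul (z ^ n) p ∈ d.half := by
  have hstep : ∀ q, q ∈ d.half → T.smul z q ∈ d.half := fun q hq =>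
    hz.le (mem_half_smul.2 (by rwa [T.inv_smul_smul]))
  have hstep' : ∀ q, q ∈ d.half → ∀ n : ℕ, T.smul (z ^ n) q ∈ d.half := by
    intro q hq n
    induction n with
    | zero => rwa [pow_zero, T.smul_one]
    | succ n ih => rw [pow_succ', T.smul_mul]; exact hstep _ ih
  by_contra! hcon
  have hnot : ∀ n : ℕ, T.smul (z ^ n) p ∉ d.half := by
    intro n hn
    obtain ⟨m, hm, hm'⟩ := hcon n
    refine hm' ?_
    rw [← Nat.sub_add_cancel hm, pow_add, T.smul_mul]
    exact hstep' _ hn _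
  -- otherwise infinitely many translates of `d` separate `d.src` from `p`
  have hmem : ∀ n : ℕ, (z ^ n)⁻¹ • d ∈ {c : T.Edge | d.src ∈ c.half ∧ p ∉ c.half} := by
    intro n
    refine ⟨?_, ?_⟩
    · rw [mem_half_smul, inv_inv]; exact hstep' _ d.src_mem n
    · rw [mem_half_smul, inv_inv]; exact hnot n
  refine Set.infinite_of_injective_forall_mem (fun n m hnm => ?_) hmem (finite_separating d.src p)
  have h' : (z ^ n)⁻¹ • d = (z ^ m)⁻¹ • d := hnm
  have h2 : (z ^ n * z ^ m) • ((z ^ n)⁻¹ • d) = z ^ m • d := by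
    rw [← mul_smul, (Commute.pow_pow_self z n m).eq, mul_inv_cancel_right]
  have h3 : (z ^ n * z ^ m) • ((z ^ m)⁻¹ • d) = z ^ n • d := by
    rw [← mul_smul, mul_inv_cancel_right]
  rw [h', h3] at h2
  exact (pow_smul_strictAnti hz).injective h2

lemma eventually_notMem {z : G} {d : T.Edge} (hz : z • d < d) (p : V) :
    ∃ N : ℕ, ∀ n ≥ N, T.smul (z ^ n)⁻¹ p ∉ d.half := by
  obtain ⟨N, hN⟩ := eventually_mem (inv_smul_bar_lt hz) p
  refine ⟨N, fun n hn => ?_⟩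
  have := hN n hn
  rwa [half_bar, inv_pow] at this

/-- A hyperbolic element has no power fixing an edge. -/
lemma pow_smul_ne {z : G} {c : T.Edge} (hz : z • c < c) (d : T.Edge) {m : ℕ} (hm : 0 < m) :
    z ^ m • d ≠ d := by
  intro h
  have hp : ∀ k : ℕ, T.smul ((z ^ m) ^ k) d.src = d.src := by
    intro k
    induction k with
    | zero => rw [pow_zero, T.smul_one]
    | succ k ih => rw [pow_succ, T.smul_mul, show T.smul (z ^ m) d.src = d.src from
        congrArg src h, ih]
  obtain ⟨N, hN⟩ := eventually_mem hz d.src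
  obtain ⟨M, hM⟩ := eventually_notMem hz d.src
  have h₁ := hN (m * N) (Nat.le_mul_of_pos_left N hm)
  have h₂ := hM (m * M) (Nat.le_mul_of_pos_left M hm)
  rw [pow_mul, hp] at h₁
  rw [pow_mul] at h₂
  refine h₂ ?_
  have : T.smul ((z ^ m) ^ M)⁻¹ d.src = d.src := by
    conv_lhs => rw [← hp M]
    rw [T.inv_smul_smul]
  rw [this]
  exact h₁

/-- The standard set of a directed edge with respect to the base vertex `v`. -/
def std (v : V) (d : T.Edge) : Set G := {x : G | T.smul x v ∈ d.half}

lemma mem_std {v : V} {d : T.Edge} {x : G} : x ∈ d.std v ↔ T.smul x v ∈ d.half := Iff.rfl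

lemma mem_std_smul {v : V} {d : T.Edge} {g x : G} :
    x ∈ (g • d).std v ↔ g⁻¹ * x ∈ d.std v := by
  rw [mem_std, mem_std, mem_half_smul, T.smul_mul]

lemma std_smul (v : V) (d : T.Edge) (g : G) : (g • d).std v = g • d.std v := by
  ext x
  rw [mem_std_smul, Set.mem_smul_set_iff_inv_smul_mem, smul_eq_mul]

lemma std_bar (v : V) (d : T.Edge) : d.bar.std v = (d.std v)ᶜ := by
  ext x
  rw [mem_std, half_bar]
  rfl

lemma mem_std_bar {v : V} {d : T.Edge} {x : G} : x ∈ d.bar.std v ↔ x ∉ d.std v := by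
  rw [std_bar]; rfl

lemma std_mono (v : V) {d c : T.Edge} (h : d ≤ c) : d.std v ⊆ c.std v := fun _ hx => h hx

end Edge

end Hyperbolic

end GTree

/-! ### Small sets -/

section Small

variable {G : Type u} [Group G] {D : Type*} [MulAction G D] {C : Type*} [MulAction G C]

/-- `S` is finite modulo the stabilizer of `d`: the elements `x⁻¹ • d`, which correspond to the
right cosets of the stabilizer of `d` that meet `S`, are finite in number. -/
def Sm (d : D) (S : Set G) : Prop := ((fun x : G => x⁻¹ • d) '' S).Finite

lemma Sm.mono {d : D} {S S' : Set G} (h : Sm d S') (hs : S ⊆ S') : Sm d S :=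
  Set.Finite.subset h (Set.image_mono hs)

lemma Sm.union {d : D} {S S' : Set G} (h : Sm d S) (h' : Sm d S') : Sm d (S ∪ S') := by
  unfold Sm
  rw [Set.image_union]
  exact Set.Finite.union h h'

lemma Sm.of_stab {d : D} {c : C} (hst : ∀ g : G, g • d = d → g • c = c) {S : Set G}
    (h : Sm d S) : Sm c S := by
  classical
  -- `x⁻¹ • d` determines `x⁻¹ • c`
  have hex : ∀ y : D, ∃ z : C, ∀ x : G, x⁻¹ • d = y → x⁻¹ • c = z := by
    intro y
    by_cases hy : ∃ x : G, x⁻¹ • d = y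
    · obtain ⟨x₀, rfl⟩ := hy
      refine ⟨x₀⁻¹ • c, fun x hx => ?_⟩
      have := hst (x₀ * x⁻¹) (by rw [mul_smul, hx, smul_inv_smul])
      rw [mul_smul] at this
      rw [← this, inv_smul_smul, this]
    · exact ⟨c, fun x hx => absurd ⟨x, hx⟩ hy⟩
  choose φ hφ using hex
  refine (Set.Finite.image φ h).subset ?_
  rintro _ ⟨x, hx, rfl⟩
  exact ⟨x⁻¹ • d, ⟨x, hx, rfl⟩, (hφ _ x rfl).symm⟩

lemma Sm.translate {d : D} {S : Set G} (h : Sm d S) (g : G) : Sm (g • d) {x | g⁻¹ * x ∈ S} := by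
  refine Set.Finite.subset h ?_
  rintro _ ⟨x, hx, rfl⟩
  exact ⟨g⁻¹ * x, hx, by simp [mul_smul]⟩

/-- Left translation by the stabilizer of `d` preserves smallness. -/
lemma Sm.translate_stab {d : D} {S : Set G} (h : Sm d S) {g : G} (hg : g • d = d) :
    Sm d {x | g⁻¹ * x ∈ S} := by
  have := h.translate g
  rwa [hg] at this

lemma Sm.exists_pow_smul_eq {d : D} {S : Set G} (h : Sm d S) {z : G}
    (hinf : {n : ℕ | z ^ n ∈ S}.Infinite) : ∃ m : ℕ, 0 < m ∧ z ^ m • d = d := by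
  have hmaps : Set.MapsTo (fun n : ℕ => (z ^ n)⁻¹ • d) {n : ℕ | z ^ n ∈ S}
      ((fun x : G => x⁻¹ • d) '' S) := fun n hn => ⟨z ^ n, hn, rfl⟩
  obtain ⟨i, -, j, -, hij, heq⟩ := hinf.exists_lt_map_eq_of_mapsTo hmaps h
  refine ⟨j - i, Nat.sub_pos_of_lt hij, ?_⟩
  have heq' : (z ^ i)⁻¹ • d = (z ^ j)⁻¹ • d := heq
  have hj : z ^ j = z ^ (j - i) * z ^ i := by rw [← pow_add, Nat.sub_add_cancel hij.le]
  have : z ^ j • ((z ^ i)⁻¹ • d) = z ^ j • ((z ^ j)⁻¹ • d) := by rw [heq']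
  rwa [smul_inv_smul, hj, mul_smul, smul_inv_smul] at this

lemma Sm.of_hFinite {d : D} {H : Subgroup G} (hH : ∀ g ∈ H, g • d = d) {S : Set G}
    (h : HFinite H S) : Sm d S := by
  obtain ⟨F, hF⟩ := h
  refine (F.finite_toSet.image (fun x : G => x⁻¹ • d)).subset ?_
  rintro _ ⟨x, hx, rfl⟩
  have := hF hx
  simp only [Set.mem_iUnion, Set.mul_singleton, Set.mem_image] at this
  obtain ⟨g, hg, k, hk, rfl⟩ := this
  refine ⟨g, hg, ?_⟩
  change g⁻¹ • d = (k * g)⁻¹ • d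
  rw [mul_inv_rev, mul_smul, hH _ (H.inv_mem hk)]

end Small

namespace GTree

/-! ### Almost equality of standard sets -/

section Rel

variable {G : Type u} [Group G] {V₁ V₂ V₃ : Type v}
  {T₁ : GTree G V₁} {T₂ : GTree G V₂} {T₃ : GTree G V₃}

namespace Edge

lemma infinite_pow_mem_std (w : V₂) {c : T₂.Edge} {z : G} (hz : z • c < c) :
    {n : ℕ | z ^ n ∈ c.std w}.Infinite := by
  obtain ⟨N, hN⟩ := eventually_mem hz w
  exact (Set.Ici_infinite N).mono hN

/-- A standard set is never small, not even with respect to the edge stabilizers of another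
tree: a translation `z` of `c` would have a power fixing `d`, and then all of `G` would be
small. -/
lemma not_sm_std (h₁ : T₁.HasTranslations) (h₂ : T₂.HasTranslations) (w : V₂)
    (d : T₁.Edge) (c : T₂.Edge) : ¬ Sm d (c.std w) := by
  intro hS
  obtain ⟨z, hz⟩ := h₂ c
  obtain ⟨m, hm, hmd⟩ := hS.exists_pow_smul_eq (infinite_pow_mem_std w hz)
  have hfix : ∀ k : ℕ, (z ^ m) ^ k • d = d := by
    intro k
    induction k with
    | zero => rw [pow_zero, one_smul]
    | succ k ih => rw [pow_succ, mul_smul, hmd, ih]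
  have huniv : Sm d (Set.univ : Set G) := by
    refine Set.Finite.subset hS ?_
    rintro _ ⟨x, -, rfl⟩
    obtain ⟨N, hN⟩ := eventually_mem hz (T₂.smul x w)
    refine ⟨(z ^ m) ^ N * x, ?_, ?_⟩
    · have := hN (m * N) (Nat.le_mul_of_pos_left N hm)
      rwa [pow_mul, ← T₂.smul_mul] at this
    · change ((z ^ m) ^ N * x)⁻¹ • d = x⁻¹ • d
      rw [mul_inv_rev, mul_smul, inv_smul_eq_iff.2 (hfix N).symm]
  obtain ⟨y, hy⟩ := h₁ d
  obtain ⟨k, hk, hkd⟩ := huniv.exists_pow_smul_eq (z := y) (by simpa using Set.infinite_univ)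
  exact pow_smul_ne hy d hk hkd

/-- A standard set is not covered by two sets that are small with respect to edges of the
same tree. -/
lemma not_std_subset_union (h₁ : T₁.HasTranslations) (v : V₁) {d d' : T₁.Edge} (c : T₁.Edge)
    {S S' : Set G} (hS : Sm d S) (hS' : Sm d' S') : ¬ c.std v ⊆ S ∪ S' := by
  intro hsub
  obtain ⟨z, hz⟩ := h₁ c
  have hinf := infinite_pow_mem_std v hz
  have : ({n : ℕ | z ^ n ∈ S} ∪ {n : ℕ | z ^ n ∈ S'}).Infinite := hinf.mono (fun n hn => hsub hn)
  rcases Set.infinite_union.1 this with h | h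
  · obtain ⟨m, hm, hmd⟩ := hS.exists_pow_smul_eq h
    exact pow_smul_ne hz d hm hmd
  · obtain ⟨m, hm, hmd⟩ := hS'.exists_pow_smul_eq h
    exact pow_smul_ne hz d' hm hmd

lemma std_nonempty (h₁ : T₁.HasTranslations) (v : V₁) (d : T₁.Edge) : (d.std v).Nonempty := by
  obtain ⟨z, hz⟩ := h₁ d
  obtain ⟨N, hN⟩ := eventually_mem hz v
  exact ⟨z ^ N, hN N le_rfl⟩

lemma not_lt_of_std_stab (v : V₁) {d : T₁.Edge} {g : G}
    (hg : ∀ x, g * x ∈ d.std v ↔ x ∈ d.std v) : ¬ g • d < d := by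
  intro hlt
  have hpow : ∀ n : ℕ, g ^ n ∈ d.std v ↔ (1 : G) ∈ d.std v := by
    intro n
    induction n with
    | zero => rw [pow_zero]
    | succ n ih => rw [pow_succ', hg, ih]
  have hpow' : ∀ n : ℕ, (g ^ n)⁻¹ ∈ d.std v ↔ (1 : G) ∈ d.std v := by
    intro n
    induction n with
    | zero => simp
    | succ n ih => rw [← hg, pow_succ, mul_inv_rev, mul_inv_cancel_left, ih]
  obtain ⟨N, hN⟩ := eventually_mem hlt v
  obtain ⟨M, hM⟩ := eventually_notMem hlt v
  exact hM M le_rfl ((hpow' M).2 ((hpow N).1 (hN N le_rfl)))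

/-- An element stabilizing the standard set of an edge fixes the edge. -/
lemma smul_eq_of_std_stab (h₁ : T₁.HasTranslations) (v : V₁) {d : T₁.Edge} {g : G}
    (hg : g • d.std v = d.std v) : g • d = d := by
  have hg' : ∀ x, g * x ∈ d.std v ↔ x ∈ d.std v := by
    intro x
    conv_lhs => rw [← hg]
    rw [← smul_eq_mul, Set.smul_mem_smul_set_iff]
  have hstd : (g • d).std v = d.std v := by rw [std_smul, hg]
  rcases nested (g • d) d with h | h | h | h
  · exact h.eq_or_lt.resolve_right (not_lt_of_std_stab v hg')
  · rcases h.eq_or_lt with h | h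
    · exact h.symm
    · refine absurd ?_ (not_lt_of_std_stab v (d := d) (g := g⁻¹) (fun x => ?_))
      · rw [← smul_lt_smul g, smul_inv_smul]
        exact h
      · rw [← hg', mul_inv_cancel_left]
  · obtain ⟨x, hx⟩ := std_nonempty h₁ v d
    exact absurd hx (mem_std_bar.1 (std_mono v h (hstd ▸ hx)))
  · obtain ⟨x, hx⟩ := std_nonempty h₁ v d.bar
    have hx' := std_mono v (bar_le_comm.1 h) hx
    rw [hstd] at hx'
    exact absurd hx' (mem_std_bar.1 hx)

/-- The standard sets of the directed edges `d`, `c` of two trees (with base vertices `v`, `w`)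
are almost equal modulo the stabilizer of `d`. -/
def Rel (v : V₁) (w : V₂) (d : T₁.Edge) (c : T₂.Edge) : Prop :=
  Sm d {x : G | ¬ (x ∈ d.std v ↔ x ∈ c.std w)}

variable {v : V₁} {w : V₂} {u : V₃}

lemma Rel.refl (d : T₁.Edge) : Rel v v d d := by
  simp [Rel, Sm]

/-- An element fixing `d` cannot translate `c`: otherwise the whole standard set of `c` would
be a union of `d`-stabilizer translates of the small set `c.std w \ (h • c).std w`. -/
lemma Rel.not_smul_lt (h₁ : T₁.HasTranslations) (h₂ : T₂.HasTranslations) {d : T₁.Edge}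
    {c : T₂.Edge} (hr : Rel v w d c) {h : G} (hd : h • d = d) : ¬ h • c < c := by
  intro hlt
  have hinv : ∀ x, h⁻¹ * x ∈ d.std v ↔ x ∈ d.std v := by
    intro x
    rw [← mem_std_smul, hd]
  have hdiff : Sm d (c.std w \ (h • c).std w) := by
    refine (hr.union (hr.translate_stab hd)).mono ?_
    rintro x ⟨hx, hx'⟩
    rw [mem_std_smul] at hx'
    by_cases hxd : x ∈ d.std v
    · right
      exact fun hh => hx' (hh.1 ((hinv x).2 hxd))
    · left
      exact fun hh => hxd (hh.2 hx)
  have hfix : ∀ k : ℕ, h ^ k • d = d := by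
    intro k
    induction k with
    | zero => rw [pow_zero, one_smul]
    | succ k ih => rw [pow_succ, mul_smul, hd, ih]
  refine not_sm_std h₁ h₂ w d c (Set.Finite.subset hdiff ?_)
  rintro _ ⟨x, hx, rfl⟩
  -- the last translate `h ^ n • c` whose standard set contains `x`
  have hex : ∃ n : ℕ, (h ^ n)⁻¹ * x ∉ c.std w := by
    obtain ⟨N, hN⟩ := eventually_notMem hlt (T₂.smul x w)
    refine ⟨N, ?_⟩
    have := hN N le_rfl
    rwa [← T₂.smul_mul] at this
  classical
  have hpos : Nat.find hex ≠ 0 := by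
    intro h0
    have := Nat.find_spec hex
    rw [h0] at this
    simp only [pow_zero, inv_one, one_mul] at this
    exact this hx
  obtain ⟨n, hn⟩ := Nat.exists_eq_succ_of_ne_zero hpos
  have hmem : (h ^ n)⁻¹ * x ∈ c.std w := by
    by_contra hcon
    have := Nat.find_min' hex hcon
    omega
  have hnot : (h ^ (n + 1))⁻¹ * x ∉ c.std w := by
    have := Nat.find_spec hex
    rwa [hn] at this
  refine ⟨(h ^ n)⁻¹ * x, ⟨hmem, ?_⟩, ?_⟩
  · rw [mem_std_smul]
    rwa [pow_succ, mul_inv_rev, mul_assoc] at hnot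
  · change ((h ^ n)⁻¹ * x)⁻¹ • d = x⁻¹ • d
    rw [mul_inv_rev, inv_inv, mul_smul, hfix]

lemma Rel.stab (h₁ : T₁.HasTranslations) (h₂ : T₂.HasTranslations) {d : T₁.Edge}
    {c : T₂.Edge} (hr : Rel v w d c) {h : G} (hd : h • d = d) : h • c = c := by
  have hinv : ∀ x, h⁻¹ * x ∈ d.std v ↔ x ∈ d.std v := by
    intro x
    rw [← mem_std_smul, hd]
  have hsm : Sm d {x : G | ¬ (x ∈ (h • c).std w ↔ x ∈ c.std w)} := by
    refine (hr.union (hr.translate_stab hd)).mono ?_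
    intro x hx
    have hx' : ¬ (h⁻¹ * x ∈ c.std w ↔ x ∈ c.std w) := by rwa [← mem_std_smul]
    have := hinv x
    simp only [Set.mem_union, Set.mem_ofPred_eq]
    tauto
  rcases nested (h • c) c with hh | hh | hh | hh
  · exact hh.eq_or_lt.resolve_right (hr.not_smul_lt h₁ h₂ hd)
  · rcases hh.eq_or_lt with hh | hh
    · exact hh.symm
    · refine absurd ?_ (hr.not_smul_lt h₁ h₂ (h := h⁻¹) (inv_smul_eq_iff.2 hd.symm))
      rw [← smul_lt_smul h, smul_inv_smul]
      exact hh
  · refine absurd (hsm.mono (fun x hx hiff => ?_)) (not_sm_std h₁ h₂ w d c)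
    exact mem_std_bar.1 (std_mono w hh (hiff.2 hx)) hx
  · refine absurd (hsm.mono (fun x hx hiff => ?_)) (not_sm_std h₁ h₂ w d c.bar)
    exact mem_std_bar.1 hx (hiff.1 (std_mono w (bar_le_comm.1 hh) hx))

lemma Rel.symm (h₁ : T₁.HasTranslations) (h₂ : T₂.HasTranslations) {d : T₁.Edge}
    {c : T₂.Edge} (hr : Rel v w d c) : Rel w v c d := by
  have := hr.of_stab (c := c) (fun g hg => hr.stab h₁ h₂ hg)
  exact this.mono (fun x hx hh => hx hh.symm)

lemma Rel.trans (h₁ : T₁.HasTranslations) (h₂ : T₂.HasTranslations)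
    {d : T₁.Edge} {c : T₂.Edge} {b : T₃.Edge} (hr : Rel v w d c) (hr' : Rel w u c b) :
    Rel v u d b := by
  have := hr'.of_stab (c := d) (fun g hg => (hr.symm h₁ h₂).stab h₂ h₁ hg)
  refine (hr.union this).mono ?_
  intro x hx
  simp only [Set.mem_union, Set.mem_ofPred_eq] at hx ⊢
  tauto

lemma Rel.smul {d : T₁.Edge} {c : T₂.Edge} (hr : Rel v w d c) (g : G) :
    Rel v w (g • d) (g • c) := by
  refine (hr.translate g).mono (fun x hx => ?_)
  simpa only [Set.mem_ofPred_eq, mem_std_smul] using hx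

lemma Rel.bar {d : T₁.Edge} {c : T₂.Edge} (hr : Rel v w d c) : Rel v w d.bar c.bar := by
  have := hr.of_stab (c := d.bar) (fun g hg => by rw [smul_bar, hg])
  refine this.mono (fun x hx => ?_)
  simp only [Set.mem_ofPred_eq, mem_std_bar] at hx ⊢
  tauto

/-- Almost equality preserves comparability. -/
lemma Rel.comparable (h₁ : T₁.HasTranslations) {d d' : T₁.Edge} {c c' : T₂.Edge}
    (hr : Rel v w d c) (hr' : Rel v w d' c') (hle : d ≤ d') : c ≤ c' ∨ c' ≤ c := by
  rcases nested c c' with h | h | h | h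
  · exact Or.inl h
  · exact Or.inr h
  · refine absurd ?_ (not_std_subset_union h₁ v d hr hr')
    intro x hx
    by_contra hcon
    simp only [Set.mem_union, Set.mem_ofPred_eq, not_or, not_not] at hcon
    exact mem_std_bar.1 (std_mono w h (hcon.1.1 hx)) (hcon.2.1 (std_mono v hle hx))
  · refine absurd ?_ (not_std_subset_union h₁ v d'.bar hr hr')
    intro x hx
    by_contra hcon
    simp only [Set.mem_union, Set.mem_ofPred_eq, not_or, not_not] at hcon
    have hxd' := mem_std_bar.1 hx
    have hxc : x ∈ c.bar.std w :=
      mem_std_bar.2 (fun hh => hxd' (std_mono v hle (hcon.1.2 hh)))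
    exact hxd' (hcon.2.2 (std_mono w h hxc))

lemma Rel.total (h₁ : T₁.HasTranslations) {c c' : T₁.Edge} (hr : Rel v v c c') :
    c ≤ c' ∨ c' ≤ c :=
  Rel.comparable h₁ (Rel.refl c) hr le_rfl

/-- Comparisons inside one orbit agree in the two trees. -/
lemma Rel.lt_smul (h₁ : T₁.HasTranslations) (h₂ : T₂.HasTranslations) {d : T₁.Edge}
    {c : T₂.Edge} (hr : Rel v w d c) {t : G} (hlt : d < t • d) : c < t • c := by
  have hne : c ≠ t • c := fun h => hlt.ne ((hr.symm h₁ h₂).stab h₂ h₁ h.symm).symm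
  rcases Rel.comparable h₁ hr (hr.smul t) hlt.le with h | h
  · exact lt_of_le_of_ne h hne
  · exfalso
    have h' : t • c < c := lt_of_le_of_ne h hne.symm
    have hd : t⁻¹ • d < d := by
      rw [← smul_lt_smul t, smul_inv_smul]
      exact hlt
    obtain ⟨N, hN⟩ := eventually_mem h' w
    obtain ⟨M, hM⟩ := eventually_notMem hd v
    have hinf : {n : ℕ | t ^ n ∈ {x : G | ¬ (x ∈ d.std v ↔ x ∈ c.std w)}}.Infinite := by
      refine (Set.Ici_infinite (max N M)).mono (fun n hn hh => ?_)
      have hn' : max N M ≤ n := hn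
      have hmem : t ^ n ∈ c.std w := hN n (le_trans (le_max_left _ _) hn')
      have hnot := hM n (le_trans (le_max_right _ _) hn')
      rw [inv_pow, inv_inv] at hnot
      exact hnot (hh.2 hmem)
    obtain ⟨m, hm, hmd⟩ := Sm.exists_pow_smul_eq hr hinf
    refine pow_smul_ne hd d hm ?_
    rw [inv_pow, inv_smul_eq_iff]
    exact hmd.symm

lemma Rel.smul_le_smul (h₁ : T₁.HasTranslations) (h₂ : T₂.HasTranslations) {d : T₁.Edge}
    {c : T₂.Edge} (hr : Rel v w d c) {g k : G} (hle : g • d ≤ k • d) : g • c ≤ k • c := by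
  have hle' : d ≤ (g⁻¹ * k) • d := by
    rw [← Edge.smul_le_smul g, mul_smul, smul_inv_smul]
    exact hle
  have : c ≤ (g⁻¹ * k) • c := by
    rcases hle'.eq_or_lt with h | h
    · exact (hr.stab h₁ h₂ h.symm).ge
    · exact (hr.lt_smul h₁ h₂ h).le
  rwa [← Edge.smul_le_smul g, mul_smul, smul_inv_smul] at this

/-- If `d ≤ d'` and the region between them is covered by small sets, then the stabilizer of
`d` fixes `d'`. -/
lemma stab_of_region (h₁ : T₁.HasTranslations) {d d' : T₁.Edge} (hle : d ≤ d')
    {S S' : Set G} (hS : Sm d S) (hS' : Sm d' S') (hsub : d'.std v \ d.std v ⊆ S ∪ S')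
    {h : G} (hd : h • d = d) : h • d' = d' := by
  have hle' : d ≤ h • d' := by
    have := smul_le_of_le h hle
    rwa [hd] at this
  -- neither `h` nor `h⁻¹` translates `d'`, since they fix `d`
  have hno : ∀ k : G, k • d = d → ¬ k • d' < d' := fun k hk hlt =>
    pow_smul_ne hlt d one_pos (by rw [pow_one, hk])
  rcases nested (h • d') d' with hh | hh | hh | hh
  · exact hh.eq_or_lt.resolve_right (hno h hd)
  · rcases hh.eq_or_lt with hh | hh
    · exact hh.symm
    · refine absurd ?_ (hno h⁻¹ (inv_smul_eq_iff.2 hd.symm))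
      rw [← smul_lt_smul h, smul_inv_smul]
      exact hh
  · exact absurd (hle'.trans hh) (not_le_bar hle)
  · -- the half-tree of `(h • d').bar` lies in the region
    refine absurd ?_ (not_std_subset_union h₁ v (h • d').bar hS hS')
    intro x hx
    exact hsub ⟨std_mono v hh hx, mem_std_bar.1 (std_mono v (bar_le_bar.2 hle') hx)⟩

/-- If almost equality reverses the order of `d ≤ d'`, then `d` and `d'` themselves have
almost equal standard sets. -/
lemma Rel.of_reversed (h₁ : T₁.HasTranslations) {d d' : T₁.Edge}
    {c c' : T₂.Edge} (hr : Rel v w d c) (hr' : Rel v w d' c') (hle : d ≤ d') (hge : c' ≤ c) :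
    Rel v v d d' := by
  have hsub : ∀ x, x ∈ d'.std v → x ∉ d.std v →
      ¬ (x ∈ d.std v ↔ x ∈ c.std w) ∨ ¬ (x ∈ d'.std v ↔ x ∈ c'.std w) := by
    intro x hx hx'
    have := @std_mono _ _ _ _ w _ _ hge x
    tauto
  have hst : ∀ g : G, g • d' = d' → g • d = d := by
    intro g hg
    -- the dual of `stab_of_region`, applied to `d'.bar ≤ d.bar`
    have := stab_of_region (v := v) h₁ (bar_le_bar.2 hle) hr'.bar hr.bar (h := g) (by
      rintro x ⟨hx, hx'⟩
      rw [mem_std_bar] at hx hx'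
      have := hsub x (not_not.1 hx') hx
      simp only [Set.mem_union, Set.mem_ofPred_eq, mem_std_bar]
      tauto) (by rw [smul_bar, hg])
    rwa [smul_bar, bar_inj] at this
  refine (hr.union (hr'.of_stab (c := d) hst)).mono ?_
  intro x hx
  have h' := @std_mono _ _ _ _ v _ _ hle x
  refine hsub x ?_ ?_ <;> simp only [Set.mem_ofPred_eq] at hx <;> tauto

end Edge

end Rel

end GTree

namespace GTree

/-! ### Choosing a partner with the correct orientation pattern -/

section Partner

variable {G : Type u} [Group G] {V₁ V₂ : Type v}
  {T₁ : GTree G V₁} {T₂ : GTree G V₂}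

namespace Edge

/-- The comparisons of `e` with the reversed members of its orbit hold for `f` as well. Together
with almost equality of `e` and `f`, this makes the correspondence `g • e ↦ g • f`,
`g • e.bar ↦ g • f.bar` order preserving. -/
def Good (e : T₁.Edge) (f : T₂.Edge) : Prop :=
  ∀ k : G, (e < (k • e).bar → f < (k • f).bar) ∧ ((k • e).bar < e → (k • f).bar < f)

variable {v : V₁} {w : V₂}

lemma Rel.bar_smul_inv (h₁ : T₁.HasTranslations) {e : T₁.Edge} {k : G}
    (hk : Rel v v e (k • e).bar) : Rel v v e (k⁻¹ • e).bar := by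
  have := (hk.smul k⁻¹).bar
  rw [smul_bar, inv_smul_smul, bar_bar] at this
  exact this.symm h₁ h₁

lemma Rel.bar_smul (h₁ : T₁.HasTranslations) {e : T₁.Edge} {c : T₂.Edge} {k : G}
    (hk : Rel v v e (k • e).bar) (hc : Rel v w e c) : Rel v w e (k • c).bar :=
  hk.trans h₁ h₁ (hc.smul k).bar

lemma smul_bar_smul_lt {e : T₁.Edge} {k : G} (h : e < (k • e).bar) : e < (k⁻¹ • e).bar := by
  rw [← smul_lt_smul k, smul_bar, smul_inv_smul, lt_bar_comm]
  exact h

/-- Among the elements `k` such that `e` lies strictly below and is almost equal to `(k • e).bar`,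
one makes `(k • e).bar` smallest, and its square fixes `e`. -/
lemma exists_minimal_flip (h₁ : T₁.HasTranslations) {e : T₁.Edge} {k₀ : G}
    (hk₀ : Rel v v e (k₀ • e).bar) (hlt₀ : e < (k₀ • e).bar) :
    ∃ g : G, Rel v v e (g • e).bar ∧ e < (g • e).bar ∧
      (∀ k : G, Rel v v e (k • e).bar → e < (k • e).bar → (g • e).bar ≤ (k • e).bar) ∧
      (g * g) • e = e := by
  have hfin : {x : T₁.Edge | ∃ k : G, x = (k • e).bar ∧ Rel v v e (k • e).bar ∧
      e < (k • e).bar ∧ (k • e).bar ≤ (k₀ • e).bar}.Finite := by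
    refine (finite_Icc e (k₀ • e).bar).subset ?_
    rintro x ⟨k, rfl, -, hlt, hle⟩
    exact ⟨hlt.le, hle⟩
  obtain ⟨m, ⟨g, rfl, hg, hlt, hle⟩, hmin⟩ :=
    hfin.exists_minimal ⟨_, k₀, rfl, hk₀, hlt₀, le_rfl⟩
  have hmin' : ∀ k : G, Rel v v e (k • e).bar → e < (k • e).bar →
      (g • e).bar ≤ (k • e).bar := by
    intro k hk hk'
    rcases Rel.total h₁ ((hg.symm h₁ h₁).trans h₁ h₁ hk) with h | h
    · exact h
    · exact hmin ⟨k, rfl, hk, hk', h.trans hle⟩ h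
  refine ⟨g, hg, hlt, hmin', ?_⟩
  have hle2 : e ≤ (g * g) • e := by
    have := hmin' g⁻¹ (hg.bar_smul_inv h₁) (smul_bar_smul_lt hlt)
    rw [bar_le_bar, ← smul_le_smul g, smul_inv_smul, ← mul_smul] at this
    exact this
  rcases hle2.eq_or_lt with h | h
  · exact h.symm
  exfalso
  have h2 : Rel v v e ((g * g) • e) := by
    have := hg.bar_smul h₁ hg
    rwa [smul_bar, bar_bar, ← mul_smul] at this
  have h3 : Rel v v e ((g * (g * g)) • e).bar := by
    have := hg.bar_smul h₁ h2
    rwa [← mul_smul] at this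
  have hlt3 : ((g * (g * g)) • e).bar < (g • e).bar := by
    rw [bar_lt_bar, mul_smul, smul_lt_smul]
    exact h
  have hlt4 : ((g * (g * g)) • e).bar < e := by
    rcases Rel.total h₁ h3 with h' | h'
    · exact absurd (hmin' _ h3 (lt_of_le_of_ne h' (bar_smul_ne _ e).symm)) hlt3.not_ge
    · exact lt_of_le_of_ne h' (bar_smul_ne _ e)
  have hlt5 := hlt4.trans h
  rw [← mul_assoc, mul_smul, ← smul_bar, smul_lt_smul] at hlt5
  exact absurd hlt5 hlt.not_gt

/-- If some comparison of `e` with a reversed translate is reversed for `f`, then `f` can be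
replaced by an almost equal edge for which no comparison is reversed. The replacement lies
next to the centre of the almost equality class of `f`, on the correct side. -/
lemma exists_good_of_reversed (h₁ : T₁.HasTranslations) (h₂ : T₂.HasTranslations)
    {e : T₁.Edge} {f : T₂.Edge} (hr : Rel v w e f) {k₀ : G}
    (he : e < (k₀ • e).bar) (hf : (k₀ • f).bar < f) :
    ∃ f' : T₂.Edge, Rel v w e f' ∧ Good e f' := by
  have hk₀ : Rel v v e (k₀ • e).bar :=
    Rel.of_reversed h₁ hr (hr.smul k₀).bar he.le hf.le
  obtain ⟨g, hg, hge, hmin, hgg⟩ := exists_minimal_flip h₁ hk₀ he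
  have hflip : ∀ c : T₂.Edge, Rel v w e c → (g • (g • c).bar).bar = c := by
    intro c hc
    rw [smul_bar, bar_bar, ← mul_smul]
    exact hc.stab h₁ h₂ hgg
  have htot : ∀ {c c' : T₂.Edge}, Rel v w e c → Rel v w e c' → c ≤ c' ∨ c' ≤ c :=
    fun hc hc' => Rel.comparable h₁ hc hc' le_rfl
  have hlt_or : ∀ c : T₂.Edge, Rel v w e c → ∀ k : G, Rel v v e (k • e).bar →
      c < (k • c).bar ∨ (k • c).bar < c := by
    intro c hc k hk
    rcases htot hc (hk.bar_smul h₁ hc) with h | h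
    · exact Or.inl (lt_of_le_of_ne h (bar_smul_ne k c).symm)
    · exact Or.inr (lt_of_le_of_ne h (bar_smul_ne k c))
  obtain ⟨f₁, hf₁, hf₁lt⟩ : ∃ f₁, Rel v w e f₁ ∧ f₁ < (g • f₁).bar := by
    rcases hlt_or f hr g hg with h | h
    · exact ⟨f, hr, h⟩
    · refine ⟨(g • f).bar, hg.bar_smul h₁ hr, ?_⟩
      rwa [hflip f hr]
  have hfin : {c : T₂.Edge | Rel v w e c ∧ f₁ ≤ c ∧ c < (g • c).bar}.Finite := by
    refine (finite_Icc f₁ (g • f₁).bar).subset ?_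
    rintro c ⟨-, hle, hlt⟩
    refine ⟨hle, hlt.le.trans ?_⟩
    rw [bar_le_bar, smul_le_smul]
    exact hle
  obtain ⟨c, ⟨hc, hfc, hcg⟩, hmax⟩ := hfin.exists_maximal ⟨f₁, hf₁, le_rfl, hf₁lt⟩
  -- `c` and `(g • c).bar` are adjacent in the almost equality class
  have hgap : ∀ c' : T₂.Edge, Rel v w e c' → c < c' → (g • c).bar ≤ c' := by
    intro c' hc' hlt
    rcases htot (hg.bar_smul h₁ hc) hc' with h | h
    · exact h
    rcases hlt_or c' hc' g hg with h' | h'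
    · exact absurd (hmax ⟨hc', hfc.trans hlt.le, h'⟩ hlt.le) hlt.not_ge
    · rcases h.eq_or_lt with h | h
      · exact h.ge
      have hc'' : c < (g • c').bar := by
        have h3 : (g • (g • c).bar).bar < (g • c').bar := by
          rw [bar_lt_bar, smul_lt_smul]
          exact h
        rwa [hflip c hc] at h3
      refine absurd (hmax ⟨hg.bar_smul h₁ hc', hfc.trans hc''.le, ?_⟩ hc''.le) hc''.not_ge
      rwa [hflip c' hc']
  refine ⟨c, hc, fun k => ⟨fun hk => ?_, fun hk => ?_⟩⟩
  · rcases Rel.comparable h₁ hc (hc.smul k).bar hk.le with h | h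
    · exact lt_of_le_of_ne h (bar_smul_ne k c).symm
    · exfalso
      have hkI := Rel.of_reversed h₁ hc (hc.smul k).bar hk.le h
      have h3 := hmin k hkI hk
      rw [bar_le_bar] at h3
      have h4 := hc.smul_le_smul h₁ h₂ h3
      rw [← bar_le_bar] at h4
      exact absurd h (hcg.trans_le h4).not_ge
  · rcases Rel.comparable h₁ (hc.smul k).bar hc hk.le with h | h
    · exact lt_of_le_of_ne h (bar_smul_ne k c)
    · exfalso
      have hkI : Rel v v e (k • e).bar :=
        (Rel.of_reversed h₁ (hc.smul k).bar hc hk.le h).symm h₁ h₁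
      have h3 := hgap _ (hkI.bar_smul h₁ hc) (lt_of_le_of_ne h (bar_smul_ne k c).symm)
      rw [bar_le_bar] at h3
      have h4 := (hc.symm h₁ h₂).smul_le_smul h₂ h₁ h3
      rw [← bar_le_bar] at h4
      exact absurd hk (hge.trans_le h4).not_gt

/-- If some edges of the two trees are almost equal, then some almost equal pair also has matching
orientation patterns: `e'` is `e` or `e.bar`, depending on which comparison fails for `f`. -/
lemma exists_good (h₁ : T₁.HasTranslations) (h₂ : T₂.HasTranslations)
    {e : T₁.Edge} {f : T₂.Edge} (hr : Rel v w e f) :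
    ∃ (e' : T₁.Edge) (f' : T₂.Edge), Rel v w e' f' ∧ Good e' f' := by
  by_cases hgood : Good e f
  · exact ⟨e, f, hr, hgood⟩
  simp only [Good, not_forall, not_and_or] at hgood
  obtain ⟨k, ⟨hk, hk'⟩ | ⟨hk, hk'⟩⟩ := hgood
  · rcases Rel.comparable h₁ hr (hr.smul k).bar hk.le with h | h
    · exact absurd (lt_of_le_of_ne h (bar_smul_ne k f).symm) hk'
    · exact ⟨e, exists_good_of_reversed h₁ h₂ hr hk (lt_of_le_of_ne h (bar_smul_ne k f))⟩
  · rcases Rel.comparable h₁ (hr.smul k).bar hr hk.le with h | h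
    · exact absurd (lt_of_le_of_ne h (bar_smul_ne k f)) hk'
    · refine ⟨e.bar, exists_good_of_reversed h₁ h₂ hr.bar (k₀ := k) ?_ ?_⟩
      · rw [smul_bar, bar_lt_bar]
        exact hk
      · rw [smul_bar, bar_lt_bar]
        exact lt_of_le_of_ne h (bar_smul_ne k f).symm

end Edge

end Partner

end GTree

namespace GTree

/-! ### Trees are determined by their ordered sets of edges -/

section Iso

variable {G : Type u} [Group G] {V₁ V₂ : Type v}
  {T₁ : GTree G V₁} {T₂ : GTree G V₂}

lemma exists_src_eq (e : T₁.Edge) (x : V₁) : ∃ d : T₁.Edge, d.src = x := by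
  by_cases hx : x = e.src
  · exact ⟨e, hx.symm⟩
  obtain ⟨p⟩ := T₁.connected.preconnected x e.src
  cases p with
  | nil => exact absurd rfl hx
  | cons h _ => exact ⟨T₁.mkEdge h, rfl⟩

/-- A correspondence between the edges of two trees that is compatible with the order and with
reversal respects origins: distinct edges `d`, `d'` have the same origin if and only if `d'`
covers `d.bar`. -/
lemma src_eq_of_corr {Φ : T₁.Edge → T₂.Edge → Prop}
    (hr : ∀ c, ∃ d, Φ d c) (hbar : ∀ {d c}, Φ d c → Φ d.bar c.bar)
    (hle : ∀ {d c d' c'}, Φ d c → Φ d' c' → (d ≤ d' ↔ c ≤ c'))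
    {d d' : T₁.Edge} {c c' : T₂.Edge} (h : Φ d c) (h' : Φ d' c') (hs : d.src = d'.src) :
    c.src = c'.src := by
  by_cases hdd : d = d'
  · subst hdd
    rw [le_antisymm ((hle h h').1 le_rfl) ((hle h' h).1 le_rfl)]
  have hlt : ∀ {d c d' c'}, Φ d c → Φ d' c' → (d < d' ↔ c < c') := by
    intro d c d' c' h h'
    rw [lt_iff_le_not_ge, lt_iff_le_not_ge, hle h h', hle h' h]
  have htgt : d.bar.tgt = d'.src := by rw [Edge.tgt_bar, hs]
  have hdlt : d.bar < d' := by
    refine Edge.lt_of_src_eq_tgt htgt ?_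
    rw [Edge.bar_bar]
    exact Ne.symm hdd
  have hclt := (hlt (hbar h) h').1 hdlt
  rw [Edge.tgt_eq_src_iff hdlt] at htgt
  have : c.bar.tgt = c'.src := by
    rw [Edge.tgt_eq_src_iff hclt]
    intro y hy hy'
    obtain ⟨x, hx⟩ := hr y
    exact htgt x ((hlt (hbar h) hx).2 hy) ((hlt hx h').2 hy')
  rwa [Edge.tgt_bar] at this

/-- An equivariant correspondence between edges that is compatible with the order and with
reversal comes from an isomorphism of trees. -/
lemma equivIso_of_corr {Φ : T₁.Edge → T₂.Edge → Prop} (e : T₁.Edge)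
    (hl : ∀ d, ∃ c, Φ d c) (hr : ∀ c, ∃ d, Φ d c)
    (hsmul : ∀ (g : G) {d c}, Φ d c → Φ (g • d) (g • c))
    (hbar : ∀ {d c}, Φ d c → Φ d.bar c.bar)
    (hle : ∀ {d c d' c'}, Φ d c → Φ d' c' → (d ≤ d' ↔ c ≤ c')) :
    T₁.EquivIso T₂ := by
  obtain ⟨f, -⟩ := hl e
  have huniq : ∀ {d d' c c'}, Φ d c → Φ d' c' → d.src = d'.src → c.src = c'.src :=
    fun h h' => src_eq_of_corr hr hbar hle h h'
  have huniq' : ∀ {d d' c c'}, Φ d c → Φ d' c' → c.src = c'.src → d.src = d'.src :=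
    fun {d d' c c'} h h' => src_eq_of_corr (Φ := fun c d => Φ d c) hl hbar
      (fun h h' => (hle h h').symm) h h'
  have htot : ∀ x : V₁, ∃ y : V₂, ∃ d c, Φ d c ∧ d.src = x ∧ c.src = y := by
    intro x
    obtain ⟨d, hd⟩ := exists_src_eq e x
    obtain ⟨c, hc⟩ := hl d
    exact ⟨c.src, d, c, hc, hd, rfl⟩
  have htot' : ∀ y : V₂, ∃ x : V₁, ∃ d c, Φ d c ∧ d.src = x ∧ c.src = y := by
    intro y
    obtain ⟨c, hc⟩ := exists_src_eq f y
    obtain ⟨d, hd⟩ := hr c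
    exact ⟨d.src, d, c, hd, rfl, hc⟩
  choose F hF using htot
  choose F' hF' using htot'
  have hFsrc : ∀ {d c}, Φ d c → F d.src = c.src := by
    intro d c h
    obtain ⟨d', c', h', hd', hc'⟩ := hF d.src
    rw [← hc']
    exact huniq h' h hd'
  have hFsrc' : ∀ {d c}, Φ d c → F' c.src = d.src := by
    intro d c h
    obtain ⟨d', c', h', hd', hc'⟩ := hF' c.src
    rw [← hd']
    exact huniq' h' h hc'
  have hleft : ∀ x, F' (F x) = x := by
    intro x
    obtain ⟨d, c, h, hd, hc⟩ := hF x
    rw [← hc, hFsrc' h, hd]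
  have hright : ∀ y, F (F' y) = y := by
    intro y
    obtain ⟨d, c, h, hd, hc⟩ := hF' y
    rw [← hd, hFsrc h, hc]
  have hadj : ∀ {x y}, T₁.graph.Adj x y → T₂.graph.Adj (F x) (F y) := by
    intro x y hxy
    obtain ⟨c, hc⟩ := hl (T₁.mkEdge hxy)
    have h1 : F x = c.src := hFsrc hc
    have h2 : F y = c.tgt := hFsrc (hbar hc)
    rw [h1, h2]
    exact c.adj
  have hadj' : ∀ {x y}, T₂.graph.Adj x y → T₁.graph.Adj (F' x) (F' y) := by
    intro x y hxy
    obtain ⟨d, hd⟩ := hr (T₂.mkEdge hxy)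
    have h1 : F' x = d.src := hFsrc' hd
    have h2 : F' y = d.tgt := hFsrc' (hbar hd)
    rw [h1, h2]
    exact d.adj
  refine ⟨⟨⟨F, F', hleft, hright⟩, ?_⟩, ?_⟩
  · intro x y
    refine ⟨fun h => ?_, hadj⟩
    have := hadj' h
    simpa [hleft] using this
  · intro g x
    obtain ⟨d, c, h, hd, hc⟩ := hF x
    change F (T₁.smul g x) = T₂.smul g (F x)
    rw [← hc, ← hd, ← Edge.src_smul, ← Edge.src_smul, hFsrc (hsmul g h)]

namespace Edge

variable {v : V₁} {w : V₂}

lemma Good.symm (h₁ : T₁.HasTranslations) (h₂ : T₂.HasTranslations)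
    {e : T₁.Edge} {f : T₂.Edge} (hr : Rel v w e f) (hg : Good e f) : Good f e := by
  have hr' := hr.symm h₁ h₂
  refine fun k => ⟨fun hk => ?_, fun hk => ?_⟩
  · rcases Rel.comparable h₂ hr' (hr'.smul k).bar hk.le with h | h
    · exact lt_of_le_of_ne h (bar_smul_ne k e).symm
    · exact absurd ((hg k).2 (lt_of_le_of_ne h (bar_smul_ne k e))) hk.not_gt
  · rcases Rel.comparable h₂ (hr'.smul k).bar hr' hk.le with h | h
    · exact lt_of_le_of_ne h (bar_smul_ne k e)
    · exact absurd ((hg k).1 (lt_of_le_of_ne h (bar_smul_ne k e).symm)) hk.not_gt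

/-- The equivariant, reversal-compatible correspondence between the edges of two trees generated
by `e ↦ f`. -/
def Corr (e : T₁.Edge) (f : T₂.Edge) (d : T₁.Edge) (c : T₂.Edge) : Prop :=
  ∃ g : G, (d = g • e ∧ c = g • f) ∨ (d = (g • e).bar ∧ c = (g • f).bar)

lemma Corr.symm {e : T₁.Edge} {f : T₂.Edge} {d : T₁.Edge} {c : T₂.Edge} (h : Corr e f d c) :
    Corr f e c d := by
  obtain ⟨g, h | h⟩ := h
  · exact ⟨g, Or.inl h.symm⟩
  · exact ⟨g, Or.inr h.symm⟩

lemma Corr.le (h₁ : T₁.HasTranslations) (h₂ : T₂.HasTranslations)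
    {e : T₁.Edge} {f : T₂.Edge} (hr : Rel v w e f) (hg : Good e f)
    {d d' : T₁.Edge} {c c' : T₂.Edge} (h : Corr e f d c) (h' : Corr e f d' c')
    (hle : d ≤ d') : c ≤ c' := by
  obtain ⟨g, ⟨rfl, rfl⟩ | ⟨rfl, rfl⟩⟩ := h <;> obtain ⟨k, ⟨rfl, rfl⟩ | ⟨rfl, rfl⟩⟩ := h'
  · exact hr.smul_le_smul h₁ h₂ hle
  · rw [← smul_le_smul g⁻¹, inv_smul_smul, smul_bar, ← mul_smul] at hle ⊢
    exact ((hg _).1 (lt_of_le_of_ne hle (bar_smul_ne _ e).symm)).le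
  · rw [← smul_le_smul k⁻¹, inv_smul_smul, smul_bar, ← mul_smul] at hle ⊢
    exact ((hg _).2 (lt_of_le_of_ne hle (bar_smul_ne _ e))).le
  · rw [bar_le_bar] at hle ⊢
    exact hr.smul_le_smul h₁ h₂ hle

end Edge

/-- Edge-transitive trees with almost equal edges are isomorphic. -/
lemma equivIso_of_rel {v : V₁} {w : V₂} (h₁ : T₁.HasTranslations) (h₂ : T₂.HasTranslations)
    (ht₁ : ∀ d d' : T₁.Edge, ∃ g : G, d' = g • d ∨ d' = (g • d).bar)
    (ht₂ : ∀ d d' : T₂.Edge, ∃ g : G, d' = g • d ∨ d' = (g • d).bar)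
    {d : T₁.Edge} {c : T₂.Edge} (hr : Edge.Rel v w d c) : T₁.EquivIso T₂ := by
  obtain ⟨e, f, hr, hg⟩ := Edge.exists_good h₁ h₂ hr
  refine equivIso_of_corr (Φ := Edge.Corr e f) e ?_ ?_ ?_ ?_ ?_
  · intro d
    obtain ⟨g, h | h⟩ := ht₁ e d
    · exact ⟨g • f, g, Or.inl ⟨h, rfl⟩⟩
    · exact ⟨(g • f).bar, g, Or.inr ⟨h, rfl⟩⟩
  · intro c
    obtain ⟨g, h | h⟩ := ht₂ f c
    · exact ⟨g • e, g, Or.inl ⟨rfl, h⟩⟩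
    · exact ⟨(g • e).bar, g, Or.inr ⟨rfl, h⟩⟩
  · rintro g _ _ ⟨k, ⟨rfl, rfl⟩ | ⟨rfl, rfl⟩⟩
    · exact ⟨g * k, Or.inl ⟨(mul_smul _ _ _).symm, (mul_smul _ _ _).symm⟩⟩
    · refine ⟨g * k, Or.inr ⟨?_, ?_⟩⟩ <;> rw [Edge.smul_bar, mul_smul]
  · rintro _ _ ⟨k, ⟨rfl, rfl⟩ | ⟨rfl, rfl⟩⟩
    · exact ⟨k, Or.inr ⟨rfl, rfl⟩⟩
    · exact ⟨k, Or.inl ⟨Edge.bar_bar _, Edge.bar_bar _⟩⟩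
  · intro d c d' c' h h'
    exact ⟨h.le h₁ h₂ hr hg h',
      h.symm.le h₂ h₁ (hr.symm h₁ h₂) (hg.symm h₁ h₂ hr) h'.symm⟩

end Iso

/-! ### Members of the family `Σ` as standard sets of edges -/

section Family

variable {G : Type u} [Group G] {V : Type v} {T : GTree G V} {a b : V} {H : Subgroup G}

lemma IsSplitting.transitive (h : T.IsSplitting a b H) (d d' : T.Edge) :
    ∃ g : G, d' = g • d ∨ d' = (g • d).bar := by
  obtain ⟨g, hg⟩ := edge_transitive h d
  obtain ⟨k, hk⟩ := edge_transitive h d'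
  refine ⟨k * g⁻¹, ?_⟩
  rcases hg with rfl | rfl <;> rcases hk with rfl | rfl <;>
    simp [mul_smul]

lemma IsSplitting.exists_std_eq (h : T.IsSplitting a b H) (v : V) {A : Set G}
    (hA : A ∈ TransSet (T.standardSet a b v)) : ∃ d : T.Edge, A = d.std v := by
  have hstd : T.standardSet a b v = (T.mkEdge h.1).std v := rfl
  rw [hstd] at hA
  obtain ⟨g, rfl | rfl⟩ := hA
  · exact ⟨g • T.mkEdge h.1, (Edge.std_smul v _ g).symm⟩
  · exact ⟨(g • T.mkEdge h.1).bar, by rw [Edge.std_bar, Edge.std_smul]⟩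

lemma Edge.sm_of_smallCorner (hT : T.HasTranslations) {v : V} {d : T.Edge} {S : Set G}
    (h : SmallCorner (d.std v) S) : Sm d S :=
  Sm.of_hFinite (fun _ hg =>
    Edge.smul_eq_of_std_stab hT v (MulAction.mem_stabilizer_iff.1 hg)) h

lemma Edge.exists_corner_empty (v : V) (d c : T.Edge) :
    d.std v ∩ c.std v = ∅ ∨ d.std v ∩ (c.std v)ᶜ = ∅ ∨ (d.std v)ᶜ ∩ c.std v = ∅ ∨
      (d.std v)ᶜ ∩ (c.std v)ᶜ = ∅ := by
  simp only [← Edge.std_bar, ← Set.disjoint_iff_inter_eq_empty]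
  rcases Edge.nested d c with h | h | h | h
  · right; left
    rw [Edge.std_bar]
    exact Set.disjoint_compl_right_iff_subset.2 (Edge.std_mono v h)
  · right; right; left
    rw [Edge.std_bar]
    exact Set.disjoint_compl_left_iff_subset.2 (Edge.std_mono v h)
  · left
    have := Edge.std_mono v h
    rw [Edge.std_bar] at this
    exact Set.subset_compl_iff_disjoint_right.1 this
  · right; right; right
    rw [Edge.std_bar v c]
    exact Set.disjoint_compl_right_iff_subset.2 (Edge.std_mono v h)

end Family

end GTree

/-- for a collection of pairwise non-isomorphic splittings, the family
`Σ` of all translates of the arising almost invariant sets and their complements is in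
good position: whenever two of the four corners of a pair `(A, B)` from `Σ` are small
(i.e. `Stab(A)`-finite), at least one corner of the pair is empty. -/
theorem statement7 {G : Type u} [Group G] {J : Type w} {V : J → Type v}
    (T : ∀ j, GTree G (V j)) (a b v : ∀ j, V j) (H : J → Subgroup G)
    (hsplit : ∀ j, (T j).IsSplitting (a j) (b j) (H j))
    (X : J → Set G) (hX : ∀ j, X j = (T j).standardSet (a j) (b j) (v j))
    (hnoniso : ∀ j k, j ≠ k → ¬ (T j).EquivIso (T k)) :
    ∀ A ∈ ⋃ j, TransSet (X j), ∀ B ∈ ⋃ j, TransSet (X j),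
      TwoOfFour (SmallCorner A (A ∩ B)) (SmallCorner A (A ∩ Bᶜ))
        (SmallCorner A (Aᶜ ∩ B)) (SmallCorner A (Aᶜ ∩ Bᶜ)) →
      (A ∩ B = ∅ ∨ A ∩ Bᶜ = ∅ ∨ Aᶜ ∩ B = ∅ ∨ Aᶜ ∩ Bᶜ = ∅) := by
  intro A hA B hB htwo
  obtain ⟨j, hA⟩ := Set.mem_iUnion.1 hA
  obtain ⟨k, hB⟩ := Set.mem_iUnion.1 hB
  rw [hX] at hA hB
  obtain ⟨d, rfl⟩ := (hsplit j).exists_std_eq (v j) hA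
  by_cases hjk : j = k
  · subst hjk
    obtain ⟨c, rfl⟩ := (hsplit j).exists_std_eq (v j) hB
    exact GTree.Edge.exists_corner_empty (v j) d c
  obtain ⟨c, rfl⟩ := (hsplit k).exists_std_eq (v k) hB
  exfalso
  have hj := GTree.hasTranslations (hsplit j)
  have hk := GTree.hasTranslations (hsplit k)
  have hsm : ∀ {S}, SmallCorner (d.std (v j)) S → Sm d S :=
    fun h => GTree.Edge.sm_of_smallCorner hj h
  have hno : ∀ c' : (T k).Edge, ¬ GTree.Edge.Rel (v j) (v k) d c' := fun c' hr =>
    hnoniso j k hjk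
      (GTree.equivIso_of_rel hj hk (hsplit j).transitive (hsplit k).transitive hr)
  have hd := GTree.Edge.not_sm_std hj hj (v j) d d
  have hd' := GTree.Edge.not_sm_std hj hj (v j) d d.bar
  have hc := GTree.Edge.not_sm_std hj hk (v k) d c
  have hc' := GTree.Edge.not_sm_std hj hk (v k) d c.bar
  rw [GTree.Edge.std_bar] at hd' hc'
  rcases htwo with ⟨p, q⟩ | ⟨p, q⟩ | ⟨p, q⟩ | ⟨p, q⟩ | ⟨p, q⟩ | ⟨p, q⟩
  · refine hd (((hsm p).union (hsm q)).mono fun x hx => ?_)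
    by_cases hxc : x ∈ c.std (v k)
    · exact Or.inl ⟨hx, hxc⟩
    · exact Or.inr ⟨hx, hxc⟩
  · refine hc (((hsm p).union (hsm q)).mono fun x hx => ?_)
    by_cases hxd : x ∈ d.std (v j)
    · exact Or.inl ⟨hxd, hx⟩
    · exact Or.inr ⟨hxd, hx⟩
  · refine hno c.bar (((hsm p).union (hsm q)).mono fun x hx => ?_)
    simp only [Set.mem_ofPred_eq, GTree.Edge.mem_std_bar] at hx
    simp only [Set.mem_union, Set.mem_inter_iff, Set.mem_compl_iff]
    tauto
  · refine hno c (((hsm p).union (hsm q)).mono fun x hx => ?_)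
    simp only [Set.mem_ofPred_eq] at hx
    simp only [Set.mem_union, Set.mem_inter_iff, Set.mem_compl_iff]
    tauto
  · refine hc' (((hsm p).union (hsm q)).mono fun x hx => ?_)
    by_cases hxd : x ∈ d.std (v j)
    · exact Or.inl ⟨hxd, hx⟩
    · exact Or.inr ⟨hxd, hx⟩
  · refine hd' (((hsm p).union (hsm q)).mono fun x hx => ?_)
    by_cases hxc : x ∈ c.std (v k)
    · exact Or.inl ⟨hx, hxc⟩
    · exact Or.inr ⟨hx, hxc⟩
end

section
/- Let (P, ≤) be a partially ordered set which is the union of finitely many subsets S₁, …, Sₙ such that: (i) for every j and all a, b ∈ Sⱼ, the set {c ∈ Sⱼ | a ≤ c ≤ b} is finite; and (ii) for every x ∈ P and every j, either there exist p, q ∈ Sⱼ with p ≤ x and x ≤ q, or x is incomparable with every element of Sⱼ. Then for all a, b ∈ P, the interval {c ∈ P | a ≤ c ≤ b} is finite. -/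
open scoped Pointwise

universe u v w

/-- abstract interval finiteness from sandwiching. If a poset `P` is a
finite union of subsets, each with finite intervals, and every element of `P` is
either sandwiched between two elements of each subset or incomparable with all of its
elements, then all intervals in `P` are finite. -/
theorem statement11 {P : Type u} [PartialOrder P] (n : ℕ) (S : Fin n → Set P)
    (hcover : (⋃ j, S j) = Set.univ)
    (hfin : ∀ j : Fin n, ∀ a ∈ S j, ∀ b ∈ S j, {c ∈ S j | a ≤ c ∧ c ≤ b}.Finite)
    (hsand : ∀ x : P, ∀ j : Fin n,
      ((∃ p ∈ S j, p ≤ x) ∧ (∃ q ∈ S j, x ≤ q)) ∨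
      (∀ c ∈ S j, ¬ x ≤ c ∧ ¬ c ≤ x)) :
    ∀ a b : P, {c : P | a ≤ c ∧ c ≤ b}.Finite := by
  intro a b
  have hunion : {c : P | a ≤ c ∧ c ≤ b} = ⋃ j, {c ∈ S j | a ≤ c ∧ c ≤ b} := by
    ext c
    have hc : c ∈ ⋃ j, S j := hcover ▸ Set.mem_univ c
    simp only [Set.mem_iUnion, Set.mem_setOf_eq] at hc ⊢
    exact ⟨fun h => hc.imp fun _ hj => ⟨hj, h⟩, fun ⟨_, _, h⟩ => h⟩
  rw [hunion]
  refine Set.finite_iUnion fun j => ?_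
  rcases Set.eq_empty_or_nonempty {c ∈ S j | a ≤ c ∧ c ≤ b} with h | ⟨c, hcj, hac, hcb⟩
  · rw [h]
    exact Set.finite_empty
  -- The element `c` of `S j` is comparable with both `a` and `b`, so both are sandwiched
  -- by `S j`: below `a` lies some `p ∈ S j`, above `b` some `q ∈ S j`.
  obtain ⟨p, hp, hpa⟩ : ∃ p ∈ S j, p ≤ a :=
    (hsand a j).elim (fun h => h.1) fun h => absurd hac (h c hcj).1
  obtain ⟨q, hq, hbq⟩ : ∃ q ∈ S j, b ≤ q :=
    (hsand b j).elim (fun h => h.2) fun h => absurd hcb (h c hcj).2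
  exact (hfin j p hp q hq).subset fun d ⟨hd, had, hdb⟩ =>
    ⟨hd, hpa.trans had, hdb.trans hbq⟩
end

section
/- (Dunwoody's Theorem) Let (Σ, ≤) be a partially ordered set equipped with a free involution * on Σ (A** = A and A* ≠ A for all A) satisfying: (1) for all A, B ∈ Σ, if A ≤ B then B* ≤ A*; (2) for all A, B ∈ Σ with A ≤ B, there are only finitely many C ∈ Σ with A ≤ C ≤ B; (3) for all A, B ∈ Σ, at least one of A ≤ B, A ≤ B*, A* ≤ B, A* ≤ B* holds; (4) there do not exist A, B ∈ Σ with both A ≤ B and A ≤ B*. Then there exists a tree T (a connected acyclic simple graph) together with a bijection from Σ to the set of directed edges of T carrying the involution * to reversal of direction, such that for all A, B ∈ Σ: A ≤ B if and only if there exists a simple edge path in T (a walk traversing no edge twice) whose first directed edge is the edge corresponding to A and whose last directed edge is the edge corresponding to B. -/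
/-!
The vertices of the tree are orientations of `S`: the head of the edge `A` is the set
`headSet A = {C | C ≤ A ∨ C < A*}` of all directed edges pointing towards it, and its tail is
the head of `A*`. The two ends of `A` differ only in that `A` is replaced by `A*`, so the pair
(tail, head) determines `A`, and membership of `A` in a vertex is unchanged along every edge other
than `A` and `A*`. Hence every edge is a bridge and the graph is acyclic.

If `B` covers `A`, nestedness forces the head of `A` to equal the tail of `B`
(`headSet_eq_of_covBy`). As intervals are finite, any `A ≤ B` is refined by a saturated chain,
which is a trail from `A` to `B` (`exists_trail`); with nestedness this also gives connectedness.
Conversely, if the head of `A` is the tail of `D` and `D ≠ A*`, then `A ≤ D`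
(`le_of_head_eq_tail`), so the directed edges along a trail increase (`le_of_trail`).
-/

open scoped Pointwise

universe u v w

namespace Dunwoody

variable {S : Type u} [PartialOrder S]

/-- The head of the directed edge `A`, encoded as the set of directed edges pointing towards it:
`A` itself, the edges leading into `A`, and the edges leading into `A*` through the head of `A`. -/
def headSet (star : S → S) (A : S) : Set S := {C | C ≤ A ∨ C < star A}

/-- An order-reversing involution satisfying the nestedness conditions of Dunwoody's theorem.
It is automatically free: `A = A*` would give `A ≤ A` and `A ≤ A*`, contradicting `excl`. -/
structure NestedInvolution (star : S → S) : Prop where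
  invol : ∀ A : S, star (star A) = A
  anti : ∀ A B : S, A ≤ B → star B ≤ star A
  nested : ∀ A B : S, A ≤ B ∨ A ≤ star B ∨ star A ≤ B ∨ star A ≤ star B
  excl : ∀ A B : S, A ≤ B → A ≤ star B → False

variable {star : S → S}

lemma self_mem_headSet (A : S) : A ∈ headSet star A := Or.inl le_rfl

namespace NestedInvolution

lemma anti_lt (h : NestedInvolution star) {A B : S} (hab : A < B) : star B < star A := by
  refine lt_of_le_of_ne (h.anti _ _ hab.le) fun e => hab.ne ?_
  rw [← h.invol A, ← e, h.invol]

lemma ne_star (h : NestedInvolution star) {A B : S} (hab : A ≤ B) : B ≠ star A := by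
  rintro rfl
  exact h.excl A A le_rfl hab

lemma notMem_headSet_star (h : NestedInvolution star) (A : S) : A ∉ headSet star (star A) := by
  rintro (hA | hA)
  · exact h.excl A A le_rfl hA
  · rw [h.invol] at hA
    exact lt_irrefl _ hA

/-- The two ends of `A` contain the same directed edges apart from `A` and `A*`. -/
lemma mem_headSet_star_iff (h : NestedInvolution star) {A C : S} (h₁ : C ≠ A) (h₂ : C ≠ star A) :
    C ∈ headSet star (star A) ↔ C ∈ headSet star A := by
  simp only [headSet, Set.mem_ofPred_eq, h.invol, h₁.le_iff_lt, h₂.le_iff_lt]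
  exact or_comm

lemma headSet_subset_of_covBy (h : NestedInvolution star) {A B : S} (hab : A ⋖ B) :
    headSet star A ⊆ headSet star (star B) := by
  intro C hC
  simp only [headSet, Set.mem_ofPred_eq, h.invol] at hC ⊢
  rcases hC with hC | hC
  · exact Or.inr (hC.trans_lt hab.lt)
  · have hAC : A < star C := by simpa [h.invol] using h.anti_lt hC
    rcases h.nested C B with h' | h' | h' | h'
    · refine Or.inr (lt_of_le_of_ne h' ?_)
      rintro rfl
      exact (h.excl A C hab.le hAC.le).elim
    · exact Or.inl h'
    · have e : star C = B := by
        by_contra hne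
        exact hab.2 hAC (lt_of_le_of_ne h' hne)
      exact Or.inl (by rw [← e, h.invol])
    · have hBC : B ≤ C := by simpa [h.invol] using h.anti _ _ h'
      exact (h.excl A C (hab.le.trans hBC) hAC.le).elim

/-- If `B` covers `A`, then the head of `A` is the tail of `B`. -/
lemma headSet_eq_of_covBy (h : NestedInvolution star) {A B : S} (hab : A ⋖ B) :
    headSet star A = headSet star (star B) := by
  refine (h.headSet_subset_of_covBy hab).antisymm ?_
  have hcov : star B ⋖ star A := by
    refine ⟨h.anti_lt hab.lt, fun C h₁ h₂ => ?_⟩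
    refine hab.2 (c := star C) ?_ ?_
    · simpa [h.invol] using h.anti_lt h₂
    · simpa [h.invol] using h.anti_lt h₁
  simpa [h.invol] using h.headSet_subset_of_covBy hcov

lemma le_of_head_eq_tail (h : NestedInvolution star) {A D : S}
    (e : headSet star A = headSet star (star D)) (hne : D ≠ star A) : A ≤ D := by
  have h₁ : A ∈ headSet star (star D) := e ▸ self_mem_headSet A
  have h₂ : star D ∈ headSet star A := e ▸ self_mem_headSet (star D)
  simp only [headSet, Set.mem_ofPred_eq, h.invol] at h₁ h₂
  rcases h₁ with h₁ | h₁
  · rcases h₂ with h₂ | h₂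
    · exact (hne (by rw [h₁.antisymm h₂, h.invol])).elim
    · simpa [h.invol] using h.anti _ _ h₂.le
  · exact h₁.le

end NestedInvolution

/-- The vertices of the tree: the orientations that are heads of directed edges. -/
abbrev Vert (star : S → S) : Type u := Set.range (headSet star)

/-- The head of `A`, as a vertex. -/
def head (star : S → S) (A : S) : Vert star := ⟨headSet star A, A, rfl⟩

lemma mem_head_iff {A C : S} : C ∈ (head star A).1 ↔ C ∈ headSet star A := Iff.rfl

lemma NestedInvolution.head_star_ne (h : NestedInvolution star) (A : S) :
    head star (star A) ≠ head star A := by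
  intro e
  have := self_mem_headSet (star := star) A
  rw [← mem_head_iff, ← e] at this
  exact h.notMem_headSet_star A this

/-- The tree: each `A` gives an edge from the head of `A*` to the head of `A`. -/
def tree (h : NestedInvolution star) : SimpleGraph (Vert star) where
  Adj x y := ∃ A, x = head star (star A) ∧ y = head star A
  symm := ⟨by
    rintro x y ⟨A, rfl, rfl⟩
    exact ⟨star A, by rw [h.invol], rfl⟩⟩
  loopless := ⟨by
    rintro x ⟨A, h₁, h₂⟩
    exact h.head_star_ne A (h₁.symm.trans h₂)⟩

lemma tree_adj_iff (h : NestedInvolution star) {x y : Vert star} :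
    (tree h).Adj x y ↔ ∃ A, x = head star (star A) ∧ y = head star A := Iff.rfl

lemma tree_adj (h : NestedInvolution star) (A : S) :
    (tree h).Adj (head star (star A)) (head star A) := ⟨A, rfl, rfl⟩

lemma NestedInvolution.ends_injective (h : NestedInvolution star) {A B : S}
    (h₁ : head star (star A) = head star (star B)) (h₂ : head star A = head star B) : A = B := by
  by_contra hne
  have hA : A ∈ headSet star B := mem_head_iff.1 (h₂ ▸ self_mem_headSet (star := star) A)
  have hA' : A ∉ headSet star (star B) := fun hm =>
    h.notMem_headSet_star A (mem_head_iff.1 (h₁ ▸ mem_head_iff.2 hm))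
  by_cases hs : A = star B
  · exact hA' (hs ▸ self_mem_headSet _)
  · exact hA' ((h.mem_headSet_star_iff hne hs).2 hA)

/-- The undirected edge underlying `A`. -/
abbrev edge (star : S → S) (A : S) : Sym2 (Vert star) := s(head star (star A), head star A)

lemma edge_star (h : NestedInvolution star) (A : S) : edge star (star A) = edge star A := by
  simp only [edge, h.invol]
  exact Sym2.eq_swap

lemma edge_eq (h : NestedInvolution star) {A B : S} (e : edge star A = edge star B) :
    A = B ∨ A = star B := by
  rcases Sym2.eq_iff.1 e with ⟨h₁, h₂⟩ | ⟨h₁, h₂⟩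
  · exact Or.inl (h.ends_injective h₁ h₂)
  · exact Or.inr (h.ends_injective (by rw [h₁, h.invol]) h₂)

/-- Every edge `A` is a bridge, as membership of `A` separates its ends and is invariant along
all other edges. -/
lemma tree_isAcyclic (h : NestedInvolution star) : (tree h).IsAcyclic := by
  rw [SimpleGraph.isAcyclic_iff_forall_adj_isBridge]
  rintro _ _ ⟨A, rfl, rfl⟩
  rw [SimpleGraph.isBridge_iff]
  rintro ⟨w⟩
  have key : ∀ x y : Vert star,
      ((tree h).deleteEdges {edge star A}).Walk x y → (A ∈ x.1 ↔ A ∈ y.1) := by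
    intro x y w
    induction w with
    | nil => rfl
    | cons hadj p ih =>
      rw [← ih]
      rw [SimpleGraph.deleteEdges_adj] at hadj
      obtain ⟨⟨C, rfl, rfl⟩, hne⟩ := hadj
      refine h.mem_headSet_star_iff ?_ ?_
      · rintro rfl
        exact hne rfl
      · rintro rfl
        exact hne (edge_star h C).symm
  exact h.notMem_headSet_star A ((key _ _ w).2 (self_mem_headSet A))

/-- A saturated chain from `A` to `B` is a trail in the tree. The last conjunct, that all edges
of the trail come from elements `C ≥ A`, is what shows that prepending an edge keeps it a trail. -/
lemma exists_trail (h : NestedInvolution star) {A B : S} (hab : Relation.ReflTransGen (· ⋖ ·) A B) :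
    ∃ w : (tree h).Walk (head star (star A)) (head star B), w.IsTrail ∧
      w.edges.head? = some (edge star A) ∧ w.edges.getLast? = some (edge star B) ∧
      ∀ e ∈ w.edges, ∃ C, A ≤ C ∧ e = edge star C := by
  induction hab using Relation.ReflTransGen.head_induction_on with
  | refl =>
    refine ⟨(tree_adj h B).toWalk, ?_, rfl, rfl, ?_⟩
    · simp [SimpleGraph.Walk.isTrail_def]
    · intro e he
      exact ⟨B, le_rfl, by simpa using he⟩
  | @head A A' hcov _ ih =>
    obtain ⟨w, hw, -, hlast, hmem⟩ := ih
    have e : head star (star A') = head star A := Subtype.ext (h.headSet_eq_of_covBy hcov).symm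
    generalize hx : head star (star A') = x at w hw hlast hmem
    obtain rfl : x = head star A := hx.symm.trans e
    refine ⟨.cons (tree_adj h A) w, ?_, rfl, ?_, ?_⟩
    · rw [SimpleGraph.Walk.isTrail_cons]
      refine ⟨hw, fun hm => ?_⟩
      obtain ⟨C, hC, hCe⟩ := hmem _ hm
      have hAC : A < C := hcov.lt.trans_le hC
      rcases edge_eq h hCe with h' | h'
      · exact hAC.ne h'
      · exact h.ne_star hAC.le (by rw [h', h.invol])
    · rw [SimpleGraph.Walk.edges_cons, List.getLast?_cons, hlast]
      rfl
    · intro e he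
      rw [SimpleGraph.Walk.edges_cons, List.mem_cons] at he
      rcases he with rfl | he
      · exact ⟨A, le_rfl, rfl⟩
      · obtain ⟨C, hC, rfl⟩ := hmem e he
        exact ⟨C, hcov.le.trans hC, rfl⟩

/-- Consecutive directed edges along a trail increase, so the first one is at most the last. -/
lemma le_of_trail (h : NestedInvolution star) {x y : Vert star} (w : (tree h).Walk x y)
    (hw : w.IsTrail) :
    ∀ A B : S, x = head star (star A) → y = head star B →
      w.edges.head? = some (edge star A) → w.edges.getLast? = some (edge star B) → A ≤ B := by
  induction w with
  | nil => simp
  | @cons x v y hadj p ih =>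
    intro A B hx hy hhead hlast
    rw [SimpleGraph.Walk.isTrail_cons] at hw
    have hv : v = head star A := by
      simp only [SimpleGraph.Walk.edges_cons, List.head?_cons, Option.some.injEq, hx] at hhead
      exact Sym2.congr_right.1 hhead
    cases p with
    | nil =>
      simp only [SimpleGraph.Walk.edges_cons, SimpleGraph.Walk.edges_nil,
        List.getLast?_singleton, Option.some.injEq, hx, hv] at hlast
      rcases edge_eq h hlast with rfl | rfl
      · exact le_rfl
      · exact (h.head_star_ne B (hv.symm.trans hy)).elim
    | @cons _ z _ hadj' q =>
      obtain ⟨D, hD, hz⟩ := (tree_adj_iff h).1 hadj'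
      have hDB : D ≤ B := by
        refine ih hw.1 D B hD hy ?_ ?_
        · simp [edge, hD, hz]
        · simpa [List.getLast?_cons] using hlast
      refine le_trans (h.le_of_head_eq_tail (congrArg Subtype.val (hv.symm.trans hD)) ?_) hDB
      rintro rfl
      refine hw.2 ?_
      rw [SimpleGraph.Walk.edges_cons, List.mem_cons]
      left
      rw [hx, hv, hz]
      exact Sym2.eq_swap

lemma tree_connected [Nonempty S] (h : NestedInvolution star)
    (hchain : ∀ A B : S, A ≤ B → Relation.ReflTransGen (· ⋖ ·) A B) : (tree h).Connected := by
  have hflip : ∀ A : S, (tree h).Reachable (head star (star A)) (head star A) :=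
    fun A => (tree_adj h A).reachable
  have hle : ∀ A B : S, A ≤ B → (tree h).Reachable (head star A) (head star B) := by
    intro A B hab
    obtain ⟨w, -⟩ := exists_trail h (hchain A B hab)
    exact (hflip A).symm.trans w.reachable
  have : Nonempty (Vert star) := ⟨head star (Classical.arbitrary S)⟩
  refine SimpleGraph.Connected.mk ?_
  rintro ⟨_, A, rfl⟩ ⟨_, B, rfl⟩
  change (tree h).Reachable (head star A) (head star B)
  rcases h.nested A B with h' | h' | h' | h'
  · exact hle _ _ h'
  · exact (hle _ _ h').trans (hflip B)
  · exact (hflip A).symm.trans (hle _ _ h')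
  · exact (hflip A).symm.trans ((hle _ _ h').trans (hflip B))

/-- Finite intervals allow every `A ≤ B` to be refined by a saturated chain. -/
lemma reflTransGen_covBy (h2 : ∀ A B : S, A ≤ B → {C : S | A ≤ C ∧ C ≤ B}.Finite)
    {A B : S} (hab : A ≤ B) : Relation.ReflTransGen (· ⋖ ·) A B := by
  classical
  let _ : LocallyFiniteOrder S := LocallyFiniteOrder.ofFiniteIcc fun A B => by
    by_cases hab : A ≤ B
    · exact h2 A B hab
    · rw [Set.Icc_eq_empty hab]
      exact Set.finite_empty
  exact le_iff_reflTransGen_covBy.1 hab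

end Dunwoody

open Dunwoody in
/-- Dunwoody's theorem: a poset with a free order-reversing involution
satisfying the four conditions is the directed edge set of a tree, with `A ≤ B` iff
there is a simple edge path (a trail) whose first directed edge is `A` and whose
last directed edge is `B`. -/
theorem statement12 {S : Type u} [PartialOrder S] (star : S → S)
    (hstar2 : ∀ A : S, star (star A) = A) (hstarne : ∀ A : S, star A ≠ A)
    (h1 : ∀ A B : S, A ≤ B → star B ≤ star A)
    (h2 : ∀ A B : S, A ≤ B → {C : S | A ≤ C ∧ C ≤ B}.Finite)
    (h3 : ∀ A B : S, A ≤ B ∨ A ≤ star B ∨ star A ≤ B ∨ star A ≤ star B)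
    (h4 : ¬ ∃ A B : S, A ≤ B ∧ A ≤ star B) :
    ∃ (V : Type u) (T : SimpleGraph V) (f : S → V × V),
      T.Connected ∧ T.IsAcyclic ∧
      (∀ A : S, T.Adj (f A).1 (f A).2) ∧
      Function.Injective f ∧
      (∀ p : V × V, T.Adj p.1 p.2 → ∃ A : S, f A = p) ∧
      (∀ A : S, f (star A) = ((f A).2, (f A).1)) ∧
      (∀ A B : S, A ≤ B ↔ ∃ w : T.Walk (f A).1 (f B).2, w.IsTrail ∧
        w.edges.head? = some s((f A).1, (f A).2) ∧
        w.edges.getLast? = some s((f B).1, (f B).2)) := by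
  have h : NestedInvolution star := ⟨hstar2, h1, h3, fun A B hA hB => h4 ⟨A, B, hA, hB⟩⟩
  rcases isEmpty_or_nonempty S with hS | hS
  -- without edges the tree is a single vertex
  · exact ⟨PUnit, ⊥, fun A => isEmptyElim A, SimpleGraph.Connected.of_subsingleton,
      SimpleGraph.isAcyclic_bot, fun A => isEmptyElim A, fun A => isEmptyElim A,
      fun p hp => hp.elim, fun A => isEmptyElim A, fun A => isEmptyElim A⟩
  refine ⟨Vert star, tree h, fun A => (head star (star A), head star A),
    tree_connected h fun A B => reflTransGen_covBy h2, tree_isAcyclic h, tree_adj h, ?_, ?_, ?_, ?_⟩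
  · intro A B e
    exact h.ends_injective (congrArg Prod.fst e) (congrArg Prod.snd e)
  · rintro ⟨x, y⟩ ⟨A, hx, hy⟩
    exact ⟨A, Prod.ext hx.symm hy.symm⟩
  · intro A
    simp only [hstar2]
  · intro A B
    constructor
    · intro hab
      obtain ⟨w, hw, hhead, hlast, -⟩ := exists_trail h (reflTransGen_covBy h2 hab)
      exact ⟨w, hw, hhead, hlast⟩
    · rintro ⟨w, hw, hhead, hlast⟩
      exact le_of_trail h w hw A B rfl rfl hhead hlast
end

section
/- Let G be a group, H a subgroup, and X an H-almost invariant subset of G. Then for any g, g₀ ∈ G, the collection of sets {B ∈ Σ(X) | g ∈ B and g₀ ∉ B} (equivalently, the collection of elements of Σ(X) that separate g from g₀) is finite. -/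
/-!
The set `kX` or its complement separates `g` from `g₀` exactly when `x = k⁻¹g` lies in the
symmetric difference of `X` and `X(g₀⁻¹g)`. That difference is `H`-finite, so `x = hf` with
`h ∈ H` and `f` in a fixed finite set `F`. Then `k = g f⁻¹ h⁻¹`, and left `H`-invariance of `X`
gives `kX = g f⁻¹ X`. Only finitely many sets, indexed by `F` and the choice of `X` or its
complement, are of this form.
-/

open scoped Pointwise

universe u v w

/-- for an `H`-almost invariant subset `X` of `G` and `g, g₀ ∈ G`, only
finitely many elements of `Σ(X)` contain `g` but not `g₀`. -/
theorem statement14 {G : Type u} [Group G] (H : Subgroup G) (X : Set G)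
    (hX : IsAlmostInvariant H X) (g g₀ : G) :
    {B ∈ TransSet X | g ∈ B ∧ g₀ ∉ B}.Finite := by
  obtain ⟨hinv, hfin⟩ := hX
  obtain ⟨F, hF⟩ := hfin (g₀⁻¹ * g)
  -- An element of the symmetric difference determines the translate up to the finite set `F`.
  have key : ∀ k : G,
      k⁻¹ * g ∈ ((fun x => x * (g₀⁻¹ * g)) '' X \ X) ∪ (X \ (fun x => x * (g₀⁻¹ * g)) '' X) →
      ∃ f ∈ F, k • X = (g * f⁻¹) • X := by
    intro k hk
    have hk' := hF hk
    simp only [Set.mem_iUnion, Set.mem_mul, Set.mem_singleton_iff] at hk'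
    obtain ⟨f, hf, h, hh, y, rfl, hxy⟩ := hk'
    refine ⟨y, hf, ?_⟩
    have hX' : h • X = X := hinv h hh
    have hkeq : g * y⁻¹ = k * h := by
      rw [mul_inv_eq_iff_eq_mul, mul_assoc, hxy, mul_inv_cancel_left]
    rw [hkeq, mul_smul, hX']
  -- Right translation by `g₀⁻¹g` carries `k⁻¹g₀` to `k⁻¹g`.
  have himg : ∀ k : G, k⁻¹ * g ∈ (fun x => x * (g₀⁻¹ * g)) '' X ↔ k⁻¹ * g₀ ∈ X := by
    intro k
    constructor
    · rintro ⟨x, hx, hxe⟩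
      have : x = k⁻¹ * g₀ := by
        have := eq_mul_inv_of_mul_eq hxe
        rw [this]; group
      rwa [← this]
    · intro hx
      exact ⟨_, hx, by group⟩
  refine ((F.finite_toSet.image fun f => (g * f⁻¹) • X).union
    (F.finite_toSet.image fun f => ((g * f⁻¹) • X)ᶜ)).subset ?_
  rintro B ⟨⟨k, rfl | rfl⟩, h1, h2⟩
  · rw [Set.mem_smul_set_iff_inv_smul_mem, smul_eq_mul] at h1 h2
    obtain ⟨f, hf, he⟩ := key k (Or.inr ⟨h1, fun h => h2 ((himg k).1 h)⟩)
    exact Or.inl ⟨f, hf, he.symm⟩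
  · rw [Set.mem_compl_iff, Set.mem_smul_set_iff_inv_smul_mem, smul_eq_mul] at h1 h2
    obtain ⟨f, hf, he⟩ := key k (Or.inl ⟨(himg k).2 (not_not.1 h2), h1⟩)
    exact Or.inr ⟨f, hf, congrArg compl he.symm⟩
end

section
/- Let G be a group with a finite collection X₁, …, Xₙ of subsets, where each Xⱼ is Hⱼ-almost invariant for a subgroup Hⱼ. Let Σ := Σ(X₁) ∪ … ∪ Σ(Xₙ), with the free involution given by complementation A ↦ A* = G \ A. For each g ∈ G, the basic vertex V_g := {A ∈ Σ | g ∈ A} is an ultrafilter on (Σ, ⊆) and satisfies the descending chain condition: every descending chain B₁ ⊇ B₂ ⊇ … of elements of V_g is eventually constant. -/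
/-!
The ultrafilter axioms for `V_g` are immediate since `Σ` is closed under complementation.
For the descending chain condition, suppose `B₀ ⊇ B₁ ⊇ …` contains `g` throughout and is not
constant. Some `k` is missing from some `B i`, hence from every later term. By
`finite_separating`, almost invariance leaves only finitely many elements of `Σ` that contain
`g` but not `k`, so the tail of the chain takes finitely many values and stabilizes at a
minimal one.
-/

open scoped Pointwise

universe u v w

/-- The key finiteness: only finitely many translates of `X` or `Xᶜ` separate `g` from `k`.
If `a • X` or its complement does so, then `a⁻¹ * g` lies in the symmetric difference of
`X` and `X * (k⁻¹ * g)`, hence in one of finitely many cosets `H * f`; the translate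
`a • X` depends only on that coset. -/
lemma finite_separating {G : Type u} [Group G] (H : Subgroup G) (X : Set G)
    (hX : IsAlmostInvariant H X) (g k : G) :
    {A ∈ TransSet X | g ∈ A ∧ k ∉ A}.Finite := by
  obtain ⟨hinv, hai⟩ := hX
  obtain ⟨F, hF⟩ := hai (k⁻¹ * g)
  have key : ∀ a : G, (a⁻¹ * g ∈ X ∧ a⁻¹ * k ∉ X) ∨ (a⁻¹ * g ∉ X ∧ a⁻¹ * k ∈ X) →
      ∃ f ∈ F, a • X = (g * f⁻¹) • X := by
    intro a ha
    have himg : a⁻¹ * g ∈ (fun x => x * (k⁻¹ * g)) '' X ↔ a⁻¹ * k ∈ X := by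
      constructor
      · rintro ⟨x, hx, hxe⟩
        have : a⁻¹ * k = x := by
          have h2 : x * k⁻¹ * g = a⁻¹ * g := by simpa [mul_assoc] using hxe
          have h3 := mul_right_cancel h2
          rw [← h3]; group
        rwa [this]
      · intro h
        exact ⟨_, h, by group⟩
    have hmem : a⁻¹ * g ∈ ⋃ f ∈ F, (H : Set G) * {f} := by
      apply hF
      rcases ha with ⟨h1, h2⟩ | ⟨h1, h2⟩
      · exact Or.inr ⟨h1, fun h => h2 (himg.1 h)⟩
      · exact Or.inl ⟨himg.2 h2, h1⟩
    simp only [Set.mem_iUnion] at hmem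
    obtain ⟨f, hf, hh⟩ := hmem
    obtain ⟨h, hhH, f', hf', he⟩ := Set.mem_mul.1 hh
    rw [Set.mem_singleton_iff] at hf'
    subst hf'
    refine ⟨f', hf, ?_⟩
    have hae : a = (g * f'⁻¹) * h⁻¹ := by
      have h4 : g * (a⁻¹ * g)⁻¹ = a := by group
      rw [← h4, ← he]; group
    have hs : h⁻¹ • X = X := hinv h⁻¹ (H.inv_mem hhH)
    rw [hae, mul_smul, hs]
  refine ((F.finite_toSet.image fun f => (g * f⁻¹) • X).union
    (F.finite_toSet.image fun f => ((g * f⁻¹) • X)ᶜ)).subset ?_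
  rintro A ⟨⟨a, rfl | rfl⟩, hg, hk⟩
  · rw [Set.mem_smul_set_iff_inv_smul_mem] at hg hk
    obtain ⟨f, hf, he⟩ := key a (Or.inl ⟨hg, hk⟩)
    exact Or.inl ⟨f, hf, he.symm⟩
  · rw [Set.mem_compl_iff, Set.mem_smul_set_iff_inv_smul_mem] at hg hk
    obtain ⟨f, hf, he⟩ := key a (Or.inr ⟨hg, not_not.1 hk⟩)
    exact Or.inr ⟨f, hf, congrArg _ he.symm⟩

/-- for a finite family of almost invariant sets, each basic vertex
`V_g = {A ∈ Σ | g ∈ A}` is an ultrafilter on `(Σ, ⊆)` satisfying the descending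
chain condition. -/
theorem statement15 {G : Type u} [Group G] (n : ℕ) (H : Fin n → Subgroup G)
    (X : Fin n → Set G) (hX : ∀ j, IsAlmostInvariant (H j) (X j)) (g : G) :
    (∀ A ∈ ⋃ j, TransSet (X j),
      (A ∈ {A ∈ ⋃ j, TransSet (X j) | g ∈ A} ↔
        Aᶜ ∉ {A ∈ ⋃ j, TransSet (X j) | g ∈ A})) ∧
    (∀ A ∈ {A ∈ ⋃ j, TransSet (X j) | g ∈ A}, ∀ B ∈ ⋃ j, TransSet (X j),
      A ⊆ B → B ∈ {A ∈ ⋃ j, TransSet (X j) | g ∈ A}) ∧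
    (∀ B : ℕ → Set G, (∀ i, B i ∈ {A ∈ ⋃ j, TransSet (X j) | g ∈ A}) →
      (∀ i, B (i + 1) ⊆ B i) → ∃ N : ℕ, ∀ m : ℕ, N ≤ m → B m = B N) := by
  refine ⟨?_, ?_, ?_⟩
  · intro A hA
    have hc : Aᶜ ∈ ⋃ j, TransSet (X j) := by
      obtain ⟨j, a, ha⟩ := Set.mem_iUnion.1 hA
      refine Set.mem_iUnion.2 ⟨j, a, ?_⟩
      rcases ha with rfl | rfl
      · exact Or.inr rfl
      · exact Or.inl (compl_compl _)
    constructor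
    · exact fun h h' => h'.2 h.2
    · intro h
      exact ⟨hA, by_contra fun hg => h ⟨hc, hg⟩⟩
  · exact fun A hA B hB hAB => ⟨hB, hAB hA.2⟩
  · intro B hB hdesc
    have hanti : Antitone B := antitone_nat_of_succ_le hdesc
    by_cases hconst : ∀ i, B i = B 0
    · exact ⟨0, fun m _ => hconst m⟩
    push Not at hconst
    obtain ⟨i, hi⟩ := hconst
    obtain ⟨k, -, hk⟩ : ∃ k ∈ B 0, k ∉ B i :=
      Set.not_subset.1 fun h => hi ((hanti (Nat.zero_le i)).antisymm h)
    have hfin : (B '' Set.Ici i).Finite := by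
      refine (Set.finite_iUnion fun j =>
        finite_separating (H j) (X j) (hX j) g k).subset ?_
      rintro _ ⟨m, hm, rfl⟩
      obtain ⟨j, hj⟩ := Set.mem_iUnion.1 (hB m).1
      exact Set.mem_iUnion.2 ⟨j, hj, (hB m).2, fun h => hk (hanti hm h)⟩
    obtain ⟨_, ⟨N, hN, rfl⟩, hmin⟩ := hfin.exists_minimal ⟨_, i, Set.self_mem_Ici, rfl⟩
    refine ⟨N, fun m hm => (hanti hm).antisymm ?_⟩
    exact hmin ⟨m, le_trans hN hm, rfl⟩ (hanti hm)
end

section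
/- Let (Σ, ≤) be a partially ordered set with a free involution * (A** = A, A* ≠ A) such that A ≤ B implies B* ≤ A*. Let Σ₀ ⊆ Σ be closed under *, and let V₀ be an ultrafilter on (Σ₀, ≤). Define the closure of V₀ by V̄₀ := V₀ ∪ {B ∈ Σ \ Σ₀ | there exists A ∈ V₀ with A ≤ B}, and let Σ̄₀ := {A ∈ Σ | A ∈ V̄₀ or A* ∈ V̄₀}. Then V̄₀ is an ultrafilter on (Σ̄₀, ≤): for every A ∈ Σ̄₀ exactly one of A, A* lies in V̄₀, and whenever A ∈ V̄₀, B ∈ Σ̄₀, and A ≤ B, then B ∈ V̄₀. -/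
/-!
The closure of `V₀` is simply the up-set of `S` generated by `V₀`, because `V₀` is already
upward closed inside `S₀`; upward closure is then transitivity of `≤`. If both `A` and `A*`
were in the closure, say `C ≤ A` and `D ≤ A*` with `C, D ∈ V₀`, then `C ≤ A ≤ D*` would put
`D*` in `V₀` together with `D`, which is impossible for an ultrafilter.
-/

open scoped Pointwise

universe u v w

/-- the closure of an ultrafilter on a `*`-closed subset of a pocset is
an ultrafilter on the enlarged `*`-closed subset. -/
theorem statement16 {S : Type u} [PartialOrder S] (star : S → S)
    (hstar2 : ∀ A : S, star (star A) = A) (hstarne : ∀ A : S, star A ≠ A)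
    (hrev : ∀ A B : S, A ≤ B → star B ≤ star A)
    (S₀ : Set S) (hS₀ : ∀ A ∈ S₀, star A ∈ S₀)
    (V₀ : Set S) (hV₀sub : V₀ ⊆ S₀)
    (hV₀uf : ∀ A ∈ S₀, (A ∈ V₀ ↔ star A ∉ V₀))
    (hV₀up : ∀ A ∈ V₀, ∀ B ∈ S₀, A ≤ B → B ∈ V₀) :
    (∀ A ∈ {A : S | A ∈ V₀ ∪ {B : S | B ∉ S₀ ∧ ∃ A' ∈ V₀, A' ≤ B} ∨
        star A ∈ V₀ ∪ {B : S | B ∉ S₀ ∧ ∃ A' ∈ V₀, A' ≤ B}},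
      (A ∈ V₀ ∪ {B : S | B ∉ S₀ ∧ ∃ A' ∈ V₀, A' ≤ B} ↔
        star A ∉ V₀ ∪ {B : S | B ∉ S₀ ∧ ∃ A' ∈ V₀, A' ≤ B})) ∧
    (∀ A ∈ V₀ ∪ {B : S | B ∉ S₀ ∧ ∃ A' ∈ V₀, A' ≤ B},
      ∀ B ∈ {A : S | A ∈ V₀ ∪ {B : S | B ∉ S₀ ∧ ∃ A' ∈ V₀, A' ≤ B} ∨
        star A ∈ V₀ ∪ {B : S | B ∉ S₀ ∧ ∃ A' ∈ V₀, A' ≤ B}},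
      A ≤ B → B ∈ V₀ ∪ {B : S | B ∉ S₀ ∧ ∃ A' ∈ V₀, A' ≤ B}) := by
  -- Since `V₀` is upward closed in `S₀`, its closure is the up-set generated by `V₀` in `S`.
  have key : ∀ B : S, B ∈ V₀ ∪ {B : S | B ∉ S₀ ∧ ∃ A' ∈ V₀, A' ≤ B} ↔ ∃ A' ∈ V₀, A' ≤ B := by
    intro B
    constructor
    · rintro (h | ⟨-, h⟩)
      · exact ⟨B, h, le_rfl⟩
      · exact h
    · rintro ⟨A', hA', hle⟩
      by_cases hB : B ∈ S₀
      · exact Or.inl (hV₀up A' hA' B hB hle)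
      · exact Or.inr ⟨hB, A', hA', hle⟩
  simp only [key, Set.mem_ofPred_eq]
  refine ⟨fun A hA => ⟨?_, fun h => hA.resolve_right h⟩, ?_⟩
  · rintro ⟨C, hC, hCA⟩ ⟨D, hD, hDA⟩
    -- Here `C ≤ A ≤ D*`, so `V₀` would contain both `D` and `D*`.
    have hAD : A ≤ star D := by simpa only [hstar2] using hrev D (star A) hDA
    have hDS := hV₀sub hD
    exact (hV₀uf D hDS).1 hD (hV₀up C hC (star D) (hS₀ D hDS) (hCA.trans hAD))
  · rintro A ⟨C, hC, hCA⟩ B - hAB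
    exact ⟨C, hC, hCA.trans hAB⟩
end

section
/- Let (Σ, ≤) be a partially ordered set with a free involution * (A** = A, A* ≠ A) such that A ≤ B implies B* ≤ A*. Let V and W be ultrafilters on Σ. If V satisfies the descending chain condition and the symmetric difference of V and W is finite (V and W differ on only finitely many elements of Σ), then W also satisfies the descending chain condition. -/
/-!
A descending chain in `W` either stays in `V`, where the descending chain condition for `V`
applies, or leaves `V` at some point. In the latter case upward closure of `V` keeps the rest
of the chain in the finite set `W \ V`, and a descending chain with values in a finite set
becomes constant once it reaches a minimal value.
-/

open scoped Pointwise

universe u v w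

/-- in a pocset, if an ultrafilter `V` satisfies the descending chain
condition and an ultrafilter `W` differs from `V` on only finitely many elements,
then `W` also satisfies the descending chain condition. -/
theorem statement17 {S : Type u} [PartialOrder S] (star : S → S)
    (hstar2 : ∀ A : S, star (star A) = A) (hstarne : ∀ A : S, star A ≠ A)
    (hrev : ∀ A B : S, A ≤ B → star B ≤ star A)
    (V W : Set S)
    (hVuf : (∀ A : S, A ∈ V ↔ star A ∉ V) ∧ ∀ A ∈ V, ∀ B : S, A ≤ B → B ∈ V)
    (hWuf : (∀ A : S, A ∈ W ↔ star A ∉ W) ∧ ∀ A ∈ W, ∀ B : S, A ≤ B → B ∈ W)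
    (hVdcc : ∀ c : ℕ → S, (∀ i, c i ∈ V) → (∀ i, c (i + 1) ≤ c i) →
      ∃ N : ℕ, ∀ m : ℕ, N ≤ m → c m = c N)
    (hfin : ((V \ W) ∪ (W \ V)).Finite) :
    ∀ c : ℕ → S, (∀ i, c i ∈ W) → (∀ i, c (i + 1) ≤ c i) →
      ∃ N : ℕ, ∀ m : ℕ, N ≤ m → c m = c N := by
  intro c hcW hstep
  have hanti : Antitone c := antitone_nat_of_succ_le hstep
  by_cases hall : ∀ i, c i ∈ V
  · exact hVdcc c hall hstep
  · push Not at hall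
    obtain ⟨k, hk⟩ := hall
    -- `V` is upward closed, so once the chain leaves `V` it never returns: its tail
    -- lies in the finite set `W \ V`.
    have htail : Set.range (fun m => c (k + m)) ⊆ (V \ W) ∪ (W \ V) := by
      rintro _ ⟨m, rfl⟩
      exact Or.inr ⟨hcW _, fun h => hk (hVuf.2 _ h _ (hanti (Nat.le_add_right k m)))⟩
    obtain ⟨_, ⟨N, rfl⟩, hmin⟩ :=
      (hfin.subset htail).exists_minimal (Set.range_nonempty _)
    refine ⟨k + N, fun m hm => le_antisymm (hanti hm) ?_⟩
    obtain ⟨j, rfl⟩ := Nat.exists_eq_add_of_le (le_trans (Nat.le_add_right k N) hm)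
    exact hmin ⟨j, rfl⟩ (hanti hm)
end
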